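/- arXiv:2512.18678 — 7 statements merged into one kernel-verified Lean document; each statement's English description precedes it below -/
import Mathlib

section
/- Let (Ω, ℱ, P) be a probability space, let 𝒜 and ℬ be sub-σ-algebras of ℱ, and set α := sup{ |P(A ∩ B) − P(A)P(B)| : A ∈ 𝒜, B ∈ ℬ }. Let X be an 𝒜-measurable real random variable and Y a ℬ-measurable real random variable, and let p, p′ ∈ (1, ∞) satisfy 1/p + 1/p′ < 1; set r := (1 − 1/p − 1/p′)^{−1}. If E|X|^p < ∞ and E|Y|^{p′} < ∞, then |E[XY] − E[X]·E[Y]| ≤ 8 · α^{1/r} · (E|X|^p)^{1/p} · (E|Y|^{p′})^{1/p′}. -/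
open MeasureTheory
open scoped MeasureTheory

/-- The strong-mixing coefficient between two sub-σ-algebras `m₁` and `m₂`:
`α = sup { |P(A ∩ B) − P(A)P(B)| : A ∈ m₁, B ∈ m₂ }`. -/
noncomputable def alphaCoef {Ω : Type*} (m₁ m₂ : MeasurableSpace Ω)
    [mΩ : MeasurableSpace Ω] (μ : Measure Ω) : ℝ :=
  sSup {x : ℝ | ∃ A B : Set Ω, MeasurableSet[m₁] A ∧ MeasurableSet[m₂] B ∧
    x = |(μ (A ∩ B)).toReal - (μ A).toReal * (μ B).toReal|}

/-- Reduction of a bounded factor to a sign function. -/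
lemma cov_step {Ω : Type*} (m : MeasurableSpace Ω)
    [mΩ : MeasurableSpace Ω] (μ : Measure Ω) [IsProbabilityMeasure μ]
    (hm : m ≤ mΩ) (U V : Ω → ℝ) (hU : Measurable[m] U) (hV : Integrable V μ)
    (M : ℝ) (hM : ∀ ω, |U ω| ≤ M) :
    ∃ A : Set Ω, MeasurableSet[m] A ∧
      |(∫ ω, U ω * V ω ∂μ) - (∫ ω, U ω ∂μ) * ∫ ω, V ω ∂μ| ≤
      M * |(∫ ω, (A.indicator (fun _ => (2:ℝ)) ω - 1) * V ω ∂μ)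
        - (∫ ω, (A.indicator (fun _ => (2:ℝ)) ω - 1) ∂μ) * ∫ ω, V ω ∂μ| := by
  have key : ∀ (Z : Ω → ℝ), Measurable[m] Z → ∀ C : ℝ, (∀ ω, |Z ω| ≤ C) →
      (∫ ω, Z ω * V ω ∂μ) - (∫ ω, Z ω ∂μ) * ∫ ω, V ω ∂μ
        = ∫ ω, Z ω * ((μ[V|m]) ω - ∫ ω, V ω ∂μ) ∂μ := by
    intro Z hZ C hC
    have hZs : AEStronglyMeasurable Z μ := (hZ.mono hm le_rfl).aestronglyMeasurable
    have hb : ∀ᵐ ω ∂μ, ‖Z ω‖ ≤ C := Filter.Eventually.of_forall hC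
    have hZi : Integrable Z μ := Integrable.of_bound hZs C hb
    have h1 : Integrable (fun ω => Z ω * V ω) μ := hV.bdd_mul hZs hb
    have h2 : Integrable (fun ω => Z ω * (μ[V|m]) ω) μ := integrable_condExp.bdd_mul hZs hb
    have h3 : ∫ ω, Z ω * (μ[V|m]) ω ∂μ = ∫ ω, Z ω * V ω ∂μ := by
      have e := condExp_mul_of_stronglyMeasurable_left (μ := μ) (m := m) hZ.stronglyMeasurable
        (f := Z) (g := V) h1 hV
      rw [← integral_condExp hm (f := fun ω => Z ω * V ω)]
      exact (integral_congr_ae e).symm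
    simp_rw [mul_sub]
    rw [integral_sub h2 (hZi.mul_const _), h3, integral_mul_const]
  set W : Ω → ℝ := fun ω => (μ[V|m]) ω - ∫ ω, V ω ∂μ with hW
  have hWm : Measurable[m] W := (stronglyMeasurable_condExp.measurable).sub_const _
  have hWi : Integrable W μ := integrable_condExp.sub (integrable_const _)
  have hA : MeasurableSet[m] {ω | 0 ≤ W ω} := hWm measurableSet_Ici
  refine ⟨{ω | 0 ≤ W ω}, hA, ?_⟩
  rw [key U hU M hM, key (fun ω => ({ω | 0 ≤ W ω}.indicator (fun _ => (2:ℝ)) ω - 1))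
    ((measurable_const.indicator hA).sub_const _) 1 ?_]
  · have e : ∀ ω, ({ω | 0 ≤ W ω}.indicator (fun _ => (2:ℝ)) ω - 1) * W ω = |W ω| := by
      intro ω
      by_cases h : 0 ≤ W ω
      · rw [Set.indicator_of_mem (by exact h), abs_of_nonneg h]; ring
      · rw [Set.indicator_of_notMem (by exact h), abs_of_neg (not_le.1 h)]; ring
    change |∫ ω, U ω * W ω ∂μ| ≤ M * |∫ ω, _ * W ω ∂μ|
    simp_rw [e]
    rw [abs_of_nonneg (integral_nonneg fun _ => abs_nonneg _), ← integral_const_mul]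
    refine abs_integral_le_integral_abs.trans ?_
    refine integral_mono_of_nonneg (Filter.Eventually.of_forall fun _ => abs_nonneg _)
      (hWi.abs.const_mul M) (Filter.Eventually.of_forall fun ω => ?_)
    simp only [abs_mul]
    exact mul_le_mul_of_nonneg_right (hM ω) (abs_nonneg _)
  · intro ω
    by_cases h : 0 ≤ W ω
    · rw [Set.indicator_of_mem (by exact h)]; norm_num
    · rw [Set.indicator_of_notMem (by exact h)]; norm_num

lemma alpha_bdd {Ω : Type*} (m₁ m₂ : MeasurableSpace Ω)
    [mΩ : MeasurableSpace Ω] (μ : Measure Ω) [IsProbabilityMeasure μ] :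
    ∀ x ∈ {x : ℝ | ∃ A B : Set Ω, MeasurableSet[m₁] A ∧ MeasurableSet[m₂] B ∧
    x = |(μ (A ∩ B)).toReal - (μ A).toReal * (μ B).toReal|}, x ≤ 1 := by
  rintro x ⟨A, B, -, -, rfl⟩
  have h1 : (μ (A ∩ B)).toReal ≤ 1 := measureReal_le_one
  have h2 : (μ A).toReal ≤ 1 := measureReal_le_one
  have h3 : (μ B).toReal ≤ 1 := measureReal_le_one
  have h4 : 0 ≤ (μ (A ∩ B)).toReal := ENNReal.toReal_nonneg
  have h5 : 0 ≤ (μ A).toReal := ENNReal.toReal_nonneg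
  have h6 : 0 ≤ (μ B).toReal := ENNReal.toReal_nonneg
  rw [abs_le]
  constructor <;> nlinarith

lemma alpha_le_one {Ω : Type*} (m₁ m₂ : MeasurableSpace Ω)
    [mΩ : MeasurableSpace Ω] (μ : Measure Ω) [IsProbabilityMeasure μ] :
    alphaCoef m₁ m₂ μ ≤ 1 :=
  Real.sSup_le (alpha_bdd m₁ m₂ μ) zero_le_one

lemma le_alpha {Ω : Type*} (m₁ m₂ : MeasurableSpace Ω)
    [mΩ : MeasurableSpace Ω] (μ : Measure Ω) [IsProbabilityMeasure μ]
    (A B : Set Ω) (hA : MeasurableSet[m₁] A) (hB : MeasurableSet[m₂] B) :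
    |(μ (A ∩ B)).toReal - (μ A).toReal * (μ B).toReal| ≤ alphaCoef m₁ m₂ μ :=
  le_csSup ⟨1, alpha_bdd m₁ m₂ μ⟩ ⟨A, B, hA, hB, rfl⟩

lemma alpha_nonneg {Ω : Type*} (m₁ m₂ : MeasurableSpace Ω)
    [mΩ : MeasurableSpace Ω] (μ : Measure Ω) [IsProbabilityMeasure μ] :
    0 ≤ alphaCoef m₁ m₂ μ :=
  (abs_nonneg _).trans (le_alpha m₁ m₂ μ ∅ ∅ (@MeasurableSet.empty _ m₁) (@MeasurableSet.empty _ m₂))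

lemma cov_bounded {Ω : Type*} (m₁ m₂ : MeasurableSpace Ω)
    [mΩ : MeasurableSpace Ω] (μ : Measure Ω) [IsProbabilityMeasure μ]
    (hm₁ : m₁ ≤ mΩ) (hm₂ : m₂ ≤ mΩ)
    (U V : Ω → ℝ) (hU : Measurable[m₁] U) (hV : Measurable[m₂] V)
    (M N : ℝ) (hM : ∀ ω, |U ω| ≤ M) (hN : ∀ ω, |V ω| ≤ N) (hM0 : 0 ≤ M) (hN0 : 0 ≤ N) :
    |(∫ ω, U ω * V ω ∂μ) - (∫ ω, U ω ∂μ) * ∫ ω, V ω ∂μ| ≤ 4 * alphaCoef m₁ m₂ μ * M * N := by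
  have hVi : Integrable V μ := Integrable.of_bound
    (hV.mono hm₂ le_rfl).aestronglyMeasurable N (Filter.Eventually.of_forall hN)
  obtain ⟨A, hA, h1⟩ := cov_step m₁ μ hm₁ U V hU hVi M hM
  have iA : Integrable (A.indicator (fun _ => (2:ℝ))) μ :=
    (integrable_const _).indicator (hm₁ _ hA)
  have iA1 : Integrable (fun ω => A.indicator (fun _ => (2:ℝ)) ω - 1) μ :=
    iA.sub (integrable_const _)
  obtain ⟨B, hB, h2⟩ := cov_step m₂ μ hm₂ V
    (fun ω => A.indicator (fun _ => (2:ℝ)) ω - 1) hV iA1 N hN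
  have iB : Integrable (B.indicator (fun _ => (2:ℝ))) μ :=
    (integrable_const _).indicator (hm₂ _ hB)
  have iAB : Integrable ((A ∩ B).indicator (fun _ => (4:ℝ))) μ :=
    (integrable_const _).indicator ((hm₁ _ hA).inter (hm₂ _ hB))
  have eA : ∫ ω, (A.indicator (fun _ => (2:ℝ)) ω - 1) ∂μ = 2 * (μ A).toReal - 1 := by
    rw [integral_sub iA (integrable_const _), integral_indicator_const _ (hm₁ _ hA)]
    simp [Measure.real, mul_comm]
  have eB : ∫ ω, (B.indicator (fun _ => (2:ℝ)) ω - 1) ∂μ = 2 * (μ B).toReal - 1 := by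
    rw [integral_sub iB (integrable_const _), integral_indicator_const _ (hm₂ _ hB)]
    simp [Measure.real, mul_comm]
  have eAB : ∫ ω, (B.indicator (fun _ => (2:ℝ)) ω - 1) * (A.indicator (fun _ => (2:ℝ)) ω - 1) ∂μ
      = 4 * (μ (A ∩ B)).toReal - 2 * (μ A).toReal - 2 * (μ B).toReal + 1 := by
    have : ∀ ω, (B.indicator (fun _ => (2:ℝ)) ω - 1) * (A.indicator (fun _ => (2:ℝ)) ω - 1)
        = (A ∩ B).indicator (fun _ => (4:ℝ)) ω - A.indicator (fun _ => (2:ℝ)) ω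
          - (B.indicator (fun _ => (2:ℝ)) ω - 1) := by
      intro ω
      by_cases ha : ω ∈ A <;> by_cases hb : ω ∈ B <;> simp [ha, hb] <;> norm_num
    simp_rw [this]
    rw [integral_sub (f := fun ω => (A ∩ B).indicator (fun _ => (4:ℝ)) ω - A.indicator (fun _ => (2:ℝ)) ω)
      (g := fun ω => B.indicator (fun _ => (2:ℝ)) ω - 1)
      (iAB.sub iA) (iB.sub (integrable_const _)), integral_sub iAB iA, eB,
      integral_indicator_const _ (hm₁ _ hA),
      integral_indicator_const _ ((hm₁ _ hA).inter (hm₂ _ hB))]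
    simp only [Measure.real, smul_eq_mul]
    ring
  rw [eA, eB, eAB] at h2
  have h3 := le_alpha m₁ m₂ μ A B hA hB
  have e4 : 4 * (μ (A ∩ B)).toReal - 2 * (μ A).toReal - 2 * (μ B).toReal + 1
      - (2 * (μ B).toReal - 1) * (2 * (μ A).toReal - 1)
      = 4 * ((μ (A ∩ B)).toReal - (μ A).toReal * (μ B).toReal) := by ring
  rw [e4, abs_mul, abs_of_pos (by norm_num : (0:ℝ) < 4)] at h2
  have h5 : |(∫ ω, (A.indicator (fun _ => (2:ℝ)) ω - 1) * V ω ∂μ)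
        - (∫ ω, (A.indicator (fun _ => (2:ℝ)) ω - 1) ∂μ) * ∫ ω, V ω ∂μ|
        ≤ N * (4 * alphaCoef m₁ m₂ μ) := by
    rw [eA]
    calc _ = |(∫ ω, V ω * (A.indicator (fun _ => (2:ℝ)) ω - 1) ∂μ)
        - (∫ ω, V ω ∂μ) * (2 * (μ A).toReal - 1)| := by
          simp_rw [mul_comm]
      _ ≤ _ := h2.trans (by gcongr)
  calc _ ≤ _ := h1
    _ ≤ M * (N * (4 * alphaCoef m₁ m₂ μ)) := by gcongr
    _ = _ := by ring

/-- Three-factor Hölder inequality, obtained from the weighted AM-GM inequality. -/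
lemma holder3 {Ω : Type*} [mΩ : MeasurableSpace Ω] (μ : Measure Ω) [IsProbabilityMeasure μ]
    (X Y : Ω → ℝ) (hX : Measurable X) (hY : Measurable Y)
    (p p' : ℝ) (hp : 1 < p) (hp' : 1 < p') (hpp' : 1 / p + 1 / p' < 1)
    (hXp : Integrable (fun ω => |X ω| ^ p) μ)
    (hYp' : Integrable (fun ω => |Y ω| ^ p') μ)
    (K L a : ℝ) (hK : 0 < K) (hL : 0 < L) (ha : 0 < a)
    (hXK : ∫ ω, |X ω| ^ p ∂μ ≤ K ^ p) (hYL : ∫ ω, |Y ω| ^ p' ∂μ ≤ L ^ p')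
    (S : Set Ω) (hS : MeasurableSet S) (hSa : (μ S).toReal ≤ a) :
    Integrable (fun ω => S.indicator (fun _ => (1:ℝ)) ω * (|X ω| * |Y ω|)) μ ∧
    ∫ ω, S.indicator (fun _ => (1:ℝ)) ω * (|X ω| * |Y ω|) ∂μ
      ≤ a ^ (1 - 1 / p - 1 / p') * K * L := by
  have hp0 : 0 < p := by linarith
  have hp0' : 0 < p' := by linarith
  set q := 1 - 1 / p - 1 / p' with hq
  have hq0 : 0 < q := by linarith
  set G : Ω → ℝ := fun ω => a ^ q * K * L * (1 / p * (|X ω| ^ p * (K ^ p)⁻¹) +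
    1 / p' * (|Y ω| ^ p' * (L ^ p')⁻¹) + q * (S.indicator (fun _ => (1:ℝ)) ω * a⁻¹)) with hG
  have iS : Integrable (S.indicator (fun _ => (1:ℝ))) μ := (integrable_const _).indicator hS
  have i1 : Integrable (fun ω => 1 / p * (|X ω| ^ p * (K ^ p)⁻¹)) μ :=
    (hXp.mul_const _).const_mul _
  have i2 : Integrable (fun ω => 1 / p' * (|Y ω| ^ p' * (L ^ p')⁻¹)) μ :=
    (hYp'.mul_const _).const_mul _
  have i3 : Integrable (fun ω => q * (S.indicator (fun _ => (1:ℝ)) ω * a⁻¹)) μ :=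
    (iS.mul_const _).const_mul _
  have iG : Integrable G μ := ((i1.add i2).add i3).const_mul _
  have hle : ∀ ω, S.indicator (fun _ => (1:ℝ)) ω * (|X ω| * |Y ω|) ≤ G ω := by
    intro ω
    have hs0 : 0 ≤ S.indicator (fun _ => (1:ℝ)) ω := Set.indicator_nonneg (by simp) _
    have h := Real.geom_mean_le_arith_mean3_weighted (w₁ := 1 / p) (w₂ := 1 / p') (w₃ := q)
      (p₁ := |X ω| ^ p * (K ^ p)⁻¹) (p₂ := |Y ω| ^ p' * (L ^ p')⁻¹)
      (p₃ := S.indicator (fun _ => (1:ℝ)) ω * a⁻¹)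
      (by positivity) (by positivity) hq0.le (by positivity) (by positivity)
      (by positivity) (by rw [hq]; ring)
    refine le_trans (le_of_eq ?_) (mul_le_mul_of_nonneg_left h (by positivity))
    rw [Real.mul_rpow (by positivity) (by positivity), Real.mul_rpow (by positivity) (by positivity),
      Real.mul_rpow (by positivity) (by positivity), Real.inv_rpow (by positivity),
      Real.inv_rpow (by positivity), Real.inv_rpow (by positivity), one_div, one_div,
      Real.rpow_rpow_inv (abs_nonneg _) hp0.ne', Real.rpow_rpow_inv (abs_nonneg _) hp0'.ne',
      Real.rpow_rpow_inv hK.le hp0.ne', Real.rpow_rpow_inv hL.le hp0'.ne']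
    have hs : (S.indicator (fun _ => (1:ℝ)) ω) ^ q = S.indicator (fun _ => (1:ℝ)) ω := by
      by_cases h : ω ∈ S <;> simp [h, Real.zero_rpow hq0.ne']
    rw [hs]
    have : 0 < a ^ q := by positivity
    field_simp
  have h0 : ∀ ω, 0 ≤ S.indicator (fun _ => (1:ℝ)) ω * (|X ω| * |Y ω|) := fun ω =>
    mul_nonneg (Set.indicator_nonneg (by simp) _) (by positivity)
  have iF : Integrable (fun ω => S.indicator (fun _ => (1:ℝ)) ω * (|X ω| * |Y ω|)) μ := by
    refine iG.mono' ?_ (Filter.Eventually.of_forall fun ω => ?_)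
    · exact ((measurable_const.indicator hS).mul (hX.abs.mul hY.abs)).aestronglyMeasurable
    · rw [Real.norm_of_nonneg (h0 ω)]; exact hle ω
  refine ⟨iF, (integral_mono iF iG hle).trans ?_⟩
  have eG : ∫ ω, G ω ∂μ = a ^ q * K * L * (1 / p * ((∫ ω, |X ω| ^ p ∂μ) * (K ^ p)⁻¹) +
    1 / p' * ((∫ ω, |Y ω| ^ p' ∂μ) * (L ^ p')⁻¹) + q * ((μ S).toReal * a⁻¹)) := by
    rw [hG, integral_const_mul, integral_add (f := fun ω => 1 / p * (|X ω| ^ p * (K ^ p)⁻¹) +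
      1 / p' * (|Y ω| ^ p' * (L ^ p')⁻¹)) (i1.add i2) i3, integral_add i1 i2]
    simp only [integral_const_mul, integral_mul_const]
    rw [integral_indicator_const _ hS]
    simp [Measure.real]
  rw [eG]
  have hKp : 0 < K ^ p := by positivity
  have hLp : 0 < L ^ p' := by positivity
  have b1 : (∫ ω, |X ω| ^ p ∂μ) * (K ^ p)⁻¹ ≤ 1 := by
    rw [← div_eq_mul_inv]; exact (div_le_one hKp).2 hXK
  have b2 : (∫ ω, |Y ω| ^ p' ∂μ) * (L ^ p')⁻¹ ≤ 1 := by
    rw [← div_eq_mul_inv]; exact (div_le_one hLp).2 hYL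
  have b3 : (μ S).toReal * a⁻¹ ≤ 1 := by
    rw [← div_eq_mul_inv]; exact (div_le_one ha).2 hSa
  calc _ ≤ a ^ q * K * L * (1 / p * 1 + 1 / p' * 1 + q * 1) := by gcongr
    _ = _ := by rw [hq]; ring

lemma trunc_abs (x M : ℝ) (hM : 0 ≤ M) : |max (-M) (min x M)| ≤ M ∧
    |max (-M) (min x M)| ≤ |x| ∧ (|x| ≤ M → max (-M) (min x M) = x) ∧
    |x - max (-M) (min x M)| ≤ |x| := by
  rcases max_cases (-M) (min x M) with h | h <;> rcases min_cases x M with h' | h' <;>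
  rcases abs_cases x with h'' | h'' <;> refine ⟨?_, ?_, ?_, ?_⟩ <;> 
  simp only [abs_le] <;> grind

lemma trunc_diff (x M : ℝ) (hM : 0 ≤ M) :
    |x - max (-M) (min x M)| ≤ {x : ℝ | M < |x|}.indicator (fun _ => (1:ℝ)) x * |x| := by
  obtain ⟨-, -, h1, h2⟩ := trunc_abs x M hM
  by_cases h : M < |x|
  · rw [Set.indicator_of_mem (by exact h), one_mul]; exact h2
  · rw [h1 (not_lt.1 h)]; simp [Set.indicator, h]

/-- Markov's inequality in the form needed. -/
lemma markov_p {Ω : Type*} [mΩ : MeasurableSpace Ω] (μ : Measure Ω) [IsProbabilityMeasure μ]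
    (X : Ω → ℝ) (p : ℝ) (hp : 1 < p) (hXp : Integrable (fun ω => |X ω| ^ p) μ)
    (K a : ℝ) (hK : 0 < K) (ha : 0 < a) (hXK : ∫ ω, |X ω| ^ p ∂μ ≤ K ^ p) :
    (μ {ω | K * a ^ (-(1 / p)) < |X ω|}).toReal ≤ a := by
  have hp0 : 0 < p := by linarith
  have h := mul_meas_ge_le_integral_of_nonneg (μ := μ) (f := fun ω => |X ω| ^ p)
    (Filter.Eventually.of_forall fun ω => by positivity) hXp ((K * a ^ (-(1 / p))) ^ p)
  have e : (K * a ^ (-(1 / p))) ^ p = K ^ p * a⁻¹ := by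
    rw [Real.mul_rpow hK.le (by positivity), ← Real.rpow_mul ha.le]
    congr 1
    rw [show -(1 / p) * p = -1 by field_simp, Real.rpow_neg_one]
  have hsub : (μ {ω | K * a ^ (-(1 / p)) < |X ω|}).toReal ≤
      μ.real {ω | (K * a ^ (-(1 / p))) ^ p ≤ |X ω| ^ p} := by
    refine measureReal_mono (fun ω hω => ?_)
    exact Real.rpow_le_rpow (by positivity) (le_of_lt hω) hp0.le
  rw [e] at h hsub
  refine hsub.trans ?_
  have hKp : 0 < K ^ p := by positivity
  have h2 := h.trans hXK
  have h3 : K ^ p * (a⁻¹ * μ.real {ω | K ^ p * a⁻¹ ≤ |X ω| ^ p}) ≤ K ^ p * 1 := by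
    rw [← mul_assoc, mul_one]; exact h2
  have h4 := le_of_mul_le_mul_left h3 hKp
  rwa [inv_mul_le_iff₀ ha, mul_one] at h4

lemma cov_core {Ω : Type*} (m₁ m₂ : MeasurableSpace Ω)
    [mΩ : MeasurableSpace Ω] (μ : Measure Ω) [IsProbabilityMeasure μ]
    (hm₁ : m₁ ≤ mΩ) (hm₂ : m₂ ≤ mΩ)
    (X Y : Ω → ℝ) (hX : Measurable[m₁] X) (hY : Measurable[m₂] Y)
    (p p' : ℝ) (hp : 1 < p) (hp' : 1 < p') (hpp' : 1 / p + 1 / p' < 1)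
    (hXp : Integrable (fun ω => |X ω| ^ p) μ)
    (hYp' : Integrable (fun ω => |Y ω| ^ p') μ)
    (K L a : ℝ) (hK : 0 < K) (hL : 0 < L) (ha : 0 < a) (haα : alphaCoef m₁ m₂ μ ≤ a)
    (hXK : ∫ ω, |X ω| ^ p ∂μ ≤ K ^ p) (hYL : ∫ ω, |Y ω| ^ p' ∂μ ≤ L ^ p') :
    |(∫ ω, X ω * Y ω ∂μ) - (∫ ω, X ω ∂μ) * ∫ ω, Y ω ∂μ| ≤
      8 * a ^ (1 - 1 / p - 1 / p') * K * L := by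
  have hXm : Measurable X := hX.mono hm₁ le_rfl
  have hYm : Measurable Y := hY.mono hm₂ le_rfl
  set M := K * a ^ (-(1 / p)) with hMdef
  set N := L * a ^ (-(1 / p')) with hNdef
  have hM0 : 0 ≤ M := by positivity
  have hN0 : 0 ≤ N := by positivity
  set X' : Ω → ℝ := fun ω => max (-M) (min (X ω) M) with hX'
  set Y' : Ω → ℝ := fun ω => max (-N) (min (Y ω) N) with hY'
  have hX'1 : Measurable[m₁] X' := measurable_const.max (hX.min measurable_const)
  have hY'1 : Measurable[m₂] Y' := measurable_const.max (hY.min measurable_const)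
  have hX'm : Measurable X' := hX'1.mono hm₁ le_rfl
  have hY'm : Measurable Y' := hY'1.mono hm₂ le_rfl
  set S := {ω | M < |X ω|} with hSdef
  set T := {ω | N < |Y ω|} with hTdef
  have hS : MeasurableSet S := measurableSet_lt measurable_const hXm.abs
  have hT : MeasurableSet T := measurableSet_lt measurable_const hYm.abs
  have hSa : (μ S).toReal ≤ a := markov_p μ X p hp hXp K a hK ha hXK
  have hTa : (μ T).toReal ≤ a := markov_p μ Y p' hp' hYp' L a hL ha hYL
  have c1 : Integrable (fun _ : Ω => |(1:ℝ)| ^ p) μ := integrable_const _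
  have c2 : Integrable (fun _ : Ω => |(1:ℝ)| ^ p') μ := integrable_const _
  have d1 : ∫ _ : Ω, |(1:ℝ)| ^ p ∂μ ≤ 1 ^ p := by simp
  have d2 : ∫ _ : Ω, |(1:ℝ)| ^ p' ∂μ ≤ 1 ^ p' := by simp
  have u1 : (μ Set.univ).toReal ≤ 1 := by simp
  -- the six Hölder bounds
  obtain ⟨iXY, -⟩ := holder3 μ X Y hXm hYm p p' hp hp' hpp' hXp hYp' K L 1 hK hL one_pos hXK hYL
    Set.univ MeasurableSet.univ u1
  obtain ⟨iXYS, bXYS⟩ := holder3 μ X Y hXm hYm p p' hp hp' hpp' hXp hYp' K L a hK hL ha hXK hYL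
    S hS hSa
  obtain ⟨iXYT, bXYT⟩ := holder3 μ X Y hXm hYm p p' hp hp' hpp' hXp hYp' K L a hK hL ha hXK hYL
    T hT hTa
  obtain ⟨iX, bX⟩ := holder3 μ X (fun _ => 1) hXm measurable_const p p' hp hp' hpp' hXp c2 K 1 1
    hK one_pos one_pos hXK d2 Set.univ MeasurableSet.univ u1
  obtain ⟨iY, bY⟩ := holder3 μ (fun _ => 1) Y measurable_const hYm p p' hp hp' hpp' c1 hYp' 1 L 1
    one_pos hL one_pos d1 hYL Set.univ MeasurableSet.univ u1
  obtain ⟨iXS, bXS⟩ := holder3 μ X (fun _ => 1) hXm measurable_const p p' hp hp' hpp' hXp c2 K 1 a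
    hK one_pos ha hXK d2 S hS hSa
  obtain ⟨iYT, bYT⟩ := holder3 μ (fun _ => 1) Y measurable_const hYm p p' hp hp' hpp' c1 hYp' 1 L a
    one_pos hL ha d1 hYL T hT hTa
  simp only [Set.indicator_univ, one_mul, abs_one, mul_one, Real.one_rpow] at iXY iX bX iY bY iXS bXS iYT bYT
  set q := 1 - 1 / p - 1 / p' with hq
  have haq : 0 < a ^ q := by positivity
  -- pointwise bounds
  have pX : ∀ ω, |X ω - X' ω| ≤ S.indicator (fun _ => (1:ℝ)) ω * |X ω| := fun ω =>
    trunc_diff (X ω) M hM0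
  have pY : ∀ ω, |Y ω - Y' ω| ≤ T.indicator (fun _ => (1:ℝ)) ω * |Y ω| := fun ω =>
    trunc_diff (Y ω) N hN0
  have pX' : ∀ ω, |X' ω| ≤ |X ω| := fun ω => (trunc_abs (X ω) M hM0).2.1
  have pXM : ∀ ω, |X' ω| ≤ M := fun ω => (trunc_abs (X ω) M hM0).1
  have pYN : ∀ ω, |Y' ω| ≤ N := fun ω => (trunc_abs (Y ω) N hN0).1
  have jX : Integrable X μ := iX.mono' hXm.aestronglyMeasurable
    (Filter.Eventually.of_forall fun ω => le_rfl)
  have jY : Integrable Y μ := iY.mono' hYm.aestronglyMeasurable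
    (Filter.Eventually.of_forall fun ω => le_rfl)
  have jX' : Integrable X' μ := iX.mono' hX'm.aestronglyMeasurable
    (Filter.Eventually.of_forall pX')
  have jY' : Integrable Y' μ := Integrable.of_bound hY'm.aestronglyMeasurable N
    (Filter.Eventually.of_forall pYN)
  have jXY : Integrable (fun ω => X ω * Y ω) μ := iXY.mono' (hXm.mul hYm).aestronglyMeasurable
    (Filter.Eventually.of_forall fun ω => (abs_mul _ _).le)
  have jX'Y : Integrable (fun ω => X' ω * Y ω) μ := jY.bdd_mul hX'm.aestronglyMeasurable
    (Filter.Eventually.of_forall pXM)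
  have jX'Y' : Integrable (fun ω => X' ω * Y' ω) μ := jY'.bdd_mul hX'm.aestronglyMeasurable
    (Filter.Eventually.of_forall pXM)
  -- four error terms
  have gen : ∀ (f g : Ω → ℝ) (C : ℝ), Integrable g μ → (∀ ω, |f ω| ≤ g ω) →
      ∫ ω, g ω ∂μ ≤ C → |∫ ω, f ω ∂μ| ≤ C := fun f g C hg hfg hC =>
    (norm_integral_le_of_norm_le (f := f) hg (Filter.Eventually.of_forall hfg)).trans hC
  have t1 : |∫ ω, (X ω * Y ω - X' ω * Y ω) ∂μ| ≤ a ^ q * K * L := by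
    refine gen _ _ _ iXYS (fun ω => ?_) bXYS
    rw [← sub_mul, abs_mul, ← mul_assoc]
    exact mul_le_mul_of_nonneg_right (pX ω) (abs_nonneg _)
  have t2 : |∫ ω, (X' ω * Y ω - X' ω * Y' ω) ∂μ| ≤ a ^ q * K * L := by
    refine gen _ _ _ iXYT (fun ω => ?_) bXYT
    rw [← mul_sub, abs_mul, mul_left_comm]
    exact mul_le_mul (pX' ω) (pY ω) (abs_nonneg _) (abs_nonneg _)
  have t3 : |∫ ω, (X ω - X' ω) ∂μ| ≤ a ^ q * K := gen _ _ _ iXS pX bXS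
  have t4 : |∫ ω, (Y ω - Y' ω) ∂μ| ≤ a ^ q * L := gen _ _ _ iYT pY bYT
  have t5 : |∫ ω, X' ω ∂μ| ≤ K := gen _ _ _ iX pX' bX
  have t6 : |∫ ω, Y ω ∂μ| ≤ L := gen _ _ _ iY (fun _ => le_rfl) bY
  have t0 := cov_bounded m₁ m₂ μ hm₁ hm₂ X' Y' hX'1 hY'1 M N pXM pYN hM0 hN0
  have t0' : |(∫ ω, X' ω * Y' ω ∂μ) - (∫ ω, X' ω ∂μ) * ∫ ω, Y' ω ∂μ| ≤ 4 * (a ^ q * K * L) := by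
    refine t0.trans ?_
    have e : a * (a ^ (-(1 / p)) * a ^ (-(1 / p'))) = a ^ q := by
      rw [← Real.rpow_add ha]
      nth_rewrite 1 [← Real.rpow_one a]
      rw [← Real.rpow_add ha]
      congr 1; rw [hq]; ring
    calc 4 * alphaCoef m₁ m₂ μ * M * N ≤ 4 * a * M * N := by gcongr
      _ = 4 * ((a * (a ^ (-(1 / p)) * a ^ (-(1 / p')))) * K * L) := by
        rw [hMdef, hNdef]; ring
      _ = _ := by rw [e]
  rw [integral_sub jXY jX'Y] at t1
  rw [integral_sub jX'Y jX'Y'] at t2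
  rw [integral_sub jX jX'] at t3
  rw [integral_sub jY jY'] at t4
  have t36 := mul_le_mul t3 t6 (abs_nonneg _) (by positivity)
  have t54 := mul_le_mul t5 t4 (abs_nonneg _) (by positivity)
  rw [← abs_mul] at t36 t54
  rw [abs_le] at *
  constructor <;> nlinarith

/-- Covariance inequality for strong mixing: if `X` is `m₁`-measurable, `Y` is
`m₂`-measurable, `1/p + 1/p′ < 1` and `E|X|^p, E|Y|^{p′} < ∞`, then
`|E[XY] − E[X]E[Y]| ≤ 8 α^{1/r} (E|X|^p)^{1/p} (E|Y|^{p′})^{1/p′}`,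
where `1/r = 1 − 1/p − 1/p′`. -/
theorem stmt_2 {Ω : Type*} (m₁ m₂ : MeasurableSpace Ω)
    [mΩ : MeasurableSpace Ω] (μ : Measure Ω) [IsProbabilityMeasure μ]
    (hm₁ : m₁ ≤ mΩ) (hm₂ : m₂ ≤ mΩ)
    (X Y : Ω → ℝ) (hX : Measurable[m₁] X) (hY : Measurable[m₂] Y)
    (p p' : ℝ) (hp : 1 < p) (hp' : 1 < p') (hpp' : 1 / p + 1 / p' < 1)
    (hXp : Integrable (fun ω => |X ω| ^ p) μ)
    (hYp' : Integrable (fun ω => |Y ω| ^ p') μ) :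
    |(∫ ω, X ω * Y ω ∂μ) - (∫ ω, X ω ∂μ) * ∫ ω, Y ω ∂μ| ≤
      8 * alphaCoef m₁ m₂ μ ^ (1 - 1 / p - 1 / p') *
        (∫ ω, |X ω| ^ p ∂μ) ^ (1 / p) * (∫ ω, |Y ω| ^ p' ∂μ) ^ (1 / p') := by
  have hp0 : 0 < p := by linarith
  have hp0' : 0 < p' := by linarith
  have hq0 : 0 < 1 - 1 / p - 1 / p' := by linarith
  have hα := alpha_nonneg m₁ m₂ μ
  have nX : 0 ≤ ∫ ω, |X ω| ^ p ∂μ := integral_nonneg fun ω => by positivity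
  have nY : 0 ≤ ∫ ω, |Y ω| ^ p' ∂μ := integral_nonneg fun ω => by positivity
  have nR : 0 ≤ 8 * alphaCoef m₁ m₂ μ ^ (1 - 1 / p - 1 / p') *
        (∫ ω, |X ω| ^ p ∂μ) ^ (1 / p) * (∫ ω, |Y ω| ^ p' ∂μ) ^ (1 / p') := by positivity
  have zero : ∀ (Z : Ω → ℝ) (s : ℝ), 0 < s → Integrable (fun ω => |Z ω| ^ s) μ →
      ∫ ω, |Z ω| ^ s ∂μ = 0 → Z =ᵐ[μ] 0 := by
    intro Z s hs hi h0
    have := (integral_eq_zero_iff_of_nonneg (fun ω => by positivity) hi).1 h0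
    filter_upwards [this] with ω hω
    have h1 : |Z ω| ^ s = 0 := hω
    simpa using (Real.rpow_eq_zero (abs_nonneg _) hs.ne').1 h1
  rcases nX.eq_or_lt with h | hXpos
  · have hz := zero X p hp0 hXp h.symm
    have e1 : ∫ ω, X ω * Y ω ∂μ = 0 := integral_eq_zero_of_ae (by
      filter_upwards [hz] with ω hω; simp [hω])
    rw [e1, integral_eq_zero_of_ae hz]
    simpa using nR
  rcases nY.eq_or_lt with h | hYpos
  · have hz := zero Y p' hp0' hYp' h.symm
    have e1 : ∫ ω, X ω * Y ω ∂μ = 0 := integral_eq_zero_of_ae (by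
      filter_upwards [hz] with ω hω; simp [hω])
    rw [e1, integral_eq_zero_of_ae hz]
    simpa using nR
  have core : ∀ a : ℝ, alphaCoef m₁ m₂ μ < a →
      |(∫ ω, X ω * Y ω ∂μ) - (∫ ω, X ω ∂μ) * ∫ ω, Y ω ∂μ| ≤
      8 * a ^ (1 - 1 / p - 1 / p') *
        (∫ ω, |X ω| ^ p ∂μ) ^ (1 / p) * (∫ ω, |Y ω| ^ p' ∂μ) ^ (1 / p') := by
    intro a ha
    refine cov_core m₁ m₂ μ hm₁ hm₂ X Y hX hY p p' hp hp' hpp' hXp hYp' _ _ a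
      (by positivity) (by positivity) (hα.trans_lt ha) ha.le ?_ ?_
    · rw [one_div, Real.rpow_inv_rpow nX hp0.ne']
    · rw [one_div, Real.rpow_inv_rpow nY hp0'.ne']
  have hc : Continuous (fun a : ℝ => 8 * a ^ (1 - 1 / p - 1 / p') *
        (∫ ω, |X ω| ^ p ∂μ) ^ (1 / p) * (∫ ω, |Y ω| ^ p' ∂μ) ^ (1 / p')) :=
    ((continuous_const.mul (Real.continuous_rpow_const hq0.le)).mul continuous_const).mul
      continuous_const
  refine ge_of_tendsto (x := nhdsWithin (alphaCoef m₁ m₂ μ) (Set.Ioi (alphaCoef m₁ m₂ μ)))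
    ((hc.tendsto _).mono_left nhdsWithin_le_nhds) ?_
  filter_upwards [self_mem_nhdsWithin] with a ha using core a ha
end

section
/- Let N₁, N₂, T be positive integers. Define the N₁T×N₁T matrices ℍ₁ := I_{N₁} ⊗ ((N₂ I_T + J_T)/T) + (1/T) J_{N₁} ⊗ I_T, 𝔼₁ := I_T − (1/(N₂ + T)) J_T, and G := (1/(N₁ + N₂)) ( I_T + (N₁/(N₂(N₁ + N₂ + T))) J_T ). Then ℍ₁ is invertible and ℍ₁⁻¹ = (T/N₂) · ( I_{N₁} ⊗ 𝔼₁ − J_{N₁} ⊗ (𝔼₁ G 𝔼₁) ). -/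
open Matrix
open scoped Kronecker

/-- The `n × n` all-ones matrix `J_n = ι_n ι_nᵀ`. -/
noncomputable def Jmat (n : ℕ) : Matrix (Fin n) (Fin n) ℝ :=
  Matrix.of fun _ _ => (1 : ℝ)

/-- `ℍ₁ = I_{N₁} ⊗ ((N₂ I_T + J_T)/T) + (1/T) J_{N₁} ⊗ I_T`. -/
noncomputable def Hmat (N₁ N₂ T : ℕ) : Matrix (Fin N₁ × Fin T) (Fin N₁ × Fin T) ℝ :=
  (1 : Matrix (Fin N₁) (Fin N₁) ℝ) ⊗ₖ
      ((T : ℝ)⁻¹ • ((N₂ : ℝ) • (1 : Matrix (Fin T) (Fin T) ℝ) + Jmat T)) +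
    (T : ℝ)⁻¹ • (Jmat N₁ ⊗ₖ (1 : Matrix (Fin T) (Fin T) ℝ))

/-- `𝔼₁ = I_T − (1/(N₂ + T)) J_T`. -/
noncomputable def Emat (N₂ T : ℕ) : Matrix (Fin T) (Fin T) ℝ :=
  1 - ((N₂ : ℝ) + T)⁻¹ • Jmat T

/-- `G = (1/(N₁ + N₂)) (I_T + (N₁/(N₂(N₁ + N₂ + T))) J_T)`. -/
noncomputable def Gmat (N₁ N₂ T : ℕ) : Matrix (Fin T) (Fin T) ℝ :=
  ((N₁ : ℝ) + N₂)⁻¹ • (1 + ((N₁ : ℝ) / ((N₂ : ℝ) * ((N₁ : ℝ) + N₂ + T))) • Jmat T)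

theorem Jmat_mul_self (n : ℕ) : Jmat n * Jmat n = (n : ℝ) • Jmat n := by
  ext i j
  simp [Jmat, Matrix.mul_apply]

theorem EGE_eq (N₁ N₂ T : ℕ) (h₁ : 0 < N₁) (h₂ : 0 < N₂) (hT : 0 < T) :
    Emat N₂ T * Gmat N₁ N₂ T * Emat N₂ T =
      ((N₁ : ℝ) + N₂)⁻¹ • (1 : Matrix (Fin T) (Fin T) ℝ) +
        ((((N₂ : ℝ) / ((N₂ + T) * (N₁ + N₂ + T))) - ((N₁ : ℝ) + N₂)⁻¹) / T) • Jmat T := by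
  have a₁ : (0 : ℝ) < N₁ := by exact_mod_cast h₁
  have a₂ : (0 : ℝ) < N₂ := by exact_mod_cast h₂
  have a₃ : (0 : ℝ) < T := by exact_mod_cast hT
  simp only [Emat, Gmat, sub_mul, mul_sub, add_mul, mul_add, smul_mul_assoc, mul_smul_comm,
    one_mul, mul_one, Jmat_mul_self, smul_add, smul_sub, smul_smul]
  match_scalars <;> field_simp <;> ring

theorem Hmat_mul (N₁ N₂ T : ℕ) (h₁ : 0 < N₁) (h₂ : 0 < N₂) (hT : 0 < T) :
    Hmat N₁ N₂ T * (((T : ℝ) / (N₂ : ℝ)) •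
          ((1 : Matrix (Fin N₁) (Fin N₁) ℝ) ⊗ₖ Emat N₂ T -
            Jmat N₁ ⊗ₖ (Emat N₂ T * Gmat N₁ N₂ T * Emat N₂ T))) = 1 := by
  rw [EGE_eq N₁ N₂ T h₁ h₂ hT]
  have a₁ : (0 : ℝ) < N₁ := by exact_mod_cast h₁
  have a₂ : (0 : ℝ) < N₂ := by exact_mod_cast h₂
  have a₃ : (0 : ℝ) < T := by exact_mod_cast hT
  have e : Emat N₂ T = 1 + (-((N₂ : ℝ) + T)⁻¹) • Jmat T := by
    rw [Emat, neg_smul, sub_eq_add_neg]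
  rw [e, Hmat, ← Matrix.one_kronecker_one (α := ℝ) (m := Fin N₁) (n := Fin T)]
  simp only [sub_mul, mul_sub, add_mul, mul_add, smul_mul_assoc, mul_smul_comm,
    Matrix.kronecker_add, Matrix.kronecker_smul, Matrix.smul_kronecker,
    ← Matrix.mul_kronecker_mul,
    one_mul, mul_one, Jmat_mul_self, smul_add, smul_sub, smul_smul]
  match_scalars <;> field_simp <;> ring

/-- `ℍ₁` is invertible and `ℍ₁⁻¹ = (T/N₂)(I_{N₁} ⊗ 𝔼₁ − J_{N₁} ⊗ (𝔼₁ G 𝔼₁))`. -/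
theorem stmt_10 (N₁ N₂ T : ℕ) (h₁ : 0 < N₁) (h₂ : 0 < N₂) (hT : 0 < T) :
    IsUnit (Hmat N₁ N₂ T) ∧
      (Hmat N₁ N₂ T)⁻¹ =
        ((T : ℝ) / (N₂ : ℝ)) •
          ((1 : Matrix (Fin N₁) (Fin N₁) ℝ) ⊗ₖ Emat N₂ T -
            Jmat N₁ ⊗ₖ (Emat N₂ T * Gmat N₁ N₂ T * Emat N₂ T)) := by
  have h := Hmat_mul N₁ N₂ T h₁ h₂ hT
  exact ⟨IsUnit.of_mul_eq_one _ h, Matrix.inv_eq_right_inv h⟩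
end

section
/- Let N₁, N₂, T be positive integers, and let D and C be the dummy-variable matrix and the constraint matrix of the three-way interacted fixed effects specification. Then Dᵀ D + C Cᵀ is block diagonal with three diagonal blocks: B₁ = N₂ I_{N₁T} + J_{N₁} ⊗ I_T + I_{N₁} ⊗ J_T (of size N₁T × N₁T), B₂ = N₁ I_{N₂T} + J_{N₂} ⊗ I_T + I_{N₂} ⊗ J_T (of size N₂T × N₂T), and B₃ = T I_{N₁N₂} + I_{N₁} ⊗ J_{N₂} + J_{N₁} ⊗ I_{N₂} (of size N₁N₂ × N₁N₂); i.e. all off-diagonal blocks of Dᵀ D + C Cᵀ with respect to the partition (N₁T, N₂T, N₁N₂) vanish. -/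
open Matrix
open scoped Kronecker

/-- The dummy-variable matrix `D = (D₁, D₂, D₃)` of the three-way interacted
fixed effects specification, with `D₁ = I_{N₁} ⊗ ι_{N₂} ⊗ I_T`,
`D₂ = ι_{N₁} ⊗ I_{N₂} ⊗ I_T`, `D₃ = I_{N₁} ⊗ I_{N₂} ⊗ ι_T`. -/
noncomputable def Dmat (N₁ N₂ T : ℕ) :
    Matrix (Fin N₁ × Fin N₂ × Fin T)
      ((Fin N₁ × Fin T) ⊕ (Fin N₂ × Fin T) ⊕ (Fin N₁ × Fin N₂)) ℝ :=
  Matrix.of fun r l =>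
    match r, l with
    | (i, _, t), Sum.inl (i', t') => if i = i' ∧ t = t' then 1 else 0
    | (_, j, t), Sum.inr (Sum.inl (j', t')) => if j = j' ∧ t = t' then 1 else 0
    | (i, j, _), Sum.inr (Sum.inr (i', j')) => if i = i' ∧ j = j' then 1 else 0

/-- The constraint matrix `C` of the three-way interacted fixed effects
specification. -/
noncomputable def Cmat (N₁ N₂ T : ℕ) :
    Matrix ((Fin N₁ × Fin T) ⊕ (Fin N₂ × Fin T) ⊕ (Fin N₁ × Fin N₂))
      (Fin T ⊕ Fin N₁ ⊕ Fin N₂) ℝ :=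
  Matrix.of fun r l =>
    match r, l with
    | Sum.inl (_, t), Sum.inl t' => if t = t' then 1 else 0
    | Sum.inl (i, _), Sum.inr (Sum.inl i') => if i = i' then 1 else 0
    | Sum.inl _, Sum.inr (Sum.inr _) => 0
    | Sum.inr (Sum.inl (_, t)), Sum.inl t' => -(if t = t' then 1 else 0)
    | Sum.inr (Sum.inl _), Sum.inr (Sum.inl _) => 0
    | Sum.inr (Sum.inl (j, _)), Sum.inr (Sum.inr j') => if j = j' then 1 else 0
    | Sum.inr (Sum.inr _), Sum.inl _ => 0
    | Sum.inr (Sum.inr (i, _)), Sum.inr (Sum.inl i') => -(if i = i' then 1 else 0)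
    | Sum.inr (Sum.inr (_, j)), Sum.inr (Sum.inr j') => -(if j = j' then 1 else 0)

/-- `B₁ = N₂ I_{N₁T} + J_{N₁} ⊗ I_T + I_{N₁} ⊗ J_T`. -/
noncomputable def Bmat1 (N₁ N₂ T : ℕ) : Matrix (Fin N₁ × Fin T) (Fin N₁ × Fin T) ℝ :=
  (N₂ : ℝ) • 1 + Jmat N₁ ⊗ₖ (1 : Matrix (Fin T) (Fin T) ℝ) +
    (1 : Matrix (Fin N₁) (Fin N₁) ℝ) ⊗ₖ Jmat T

/-- `B₂ = N₁ I_{N₂T} + J_{N₂} ⊗ I_T + I_{N₂} ⊗ J_T`. -/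
noncomputable def Bmat2 (N₁ N₂ T : ℕ) : Matrix (Fin N₂ × Fin T) (Fin N₂ × Fin T) ℝ :=
  (N₁ : ℝ) • 1 + Jmat N₂ ⊗ₖ (1 : Matrix (Fin T) (Fin T) ℝ) +
    (1 : Matrix (Fin N₂) (Fin N₂) ℝ) ⊗ₖ Jmat T

/-- `B₃ = T I_{N₁N₂} + I_{N₁} ⊗ J_{N₂} + J_{N₁} ⊗ I_{N₂}`. -/
noncomputable def Bmat3 (N₁ N₂ T : ℕ) : Matrix (Fin N₁ × Fin N₂) (Fin N₁ × Fin N₂) ℝ :=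
  (T : ℝ) • 1 + (1 : Matrix (Fin N₁) (Fin N₁) ℝ) ⊗ₖ Jmat N₂ +
    Jmat N₁ ⊗ₖ (1 : Matrix (Fin N₂) (Fin N₂) ℝ)

/-- `Dᵀ D + C Cᵀ` is block diagonal with diagonal blocks `B₁`, `B₂`, `B₃`, and
all off-diagonal blocks with respect to the partition `(N₁T, N₂T, N₁N₂)`
vanish. -/
theorem stmt_13 (N₁ N₂ T : ℕ) (h₁ : 0 < N₁) (h₂ : 0 < N₂) (hT : 0 < T) :
    (Dmat N₁ N₂ T)ᵀ * Dmat N₁ N₂ T + Cmat N₁ N₂ T * (Cmat N₁ N₂ T)ᵀ =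
      Matrix.of (fun a b =>
        match a, b with
        | Sum.inl a', Sum.inl b' => Bmat1 N₁ N₂ T a' b'
        | Sum.inr (Sum.inl a'), Sum.inr (Sum.inl b') => Bmat2 N₁ N₂ T a' b'
        | Sum.inr (Sum.inr a'), Sum.inr (Sum.inr b') => Bmat3 N₁ N₂ T a' b'
        | _, _ => 0) := by
  clear h₁ h₂ hT
  ext a b
  rcases a with ⟨a1, a2⟩ | ⟨a1, a2⟩ | ⟨a1, a2⟩ <;>
  rcases b with ⟨b1, b2⟩ | ⟨b1, b2⟩ | ⟨b1, b2⟩ <;>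
  simp [Matrix.mul_apply, Dmat, Cmat, Bmat1, Bmat2, Bmat3, Jmat, Fintype.sum_prod_type,
    Matrix.one_apply, ite_and, Finset.sum_ite_irrel, eq_comm] <;>
  split_ifs <;> simp_all <;> ring
end

section
/- Let N₁, N₂, T be positive integers, and let D and C be the dummy-variable matrix and the constraint matrix of the three-way interacted fixed effects specification. Then the symmetric matrix Dᵀ D + C Cᵀ is positive definite; equivalently, if a vector φ ∈ ℝ^{N₁T + N₂T + N₁N₂} satisfies D φ = 0 and Cᵀ φ = 0, then φ = 0. -/
open Matrix

theorem aux_inj (N₁ N₂ T : ℕ) (h₁ : 0 < N₁) (h₂ : 0 < N₂) (hT : 0 < T)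
    (φ : ((Fin N₁ × Fin T) ⊕ (Fin N₂ × Fin T) ⊕ (Fin N₁ × Fin N₂)) → ℝ)
    (hD : (Dmat N₁ N₂ T).mulVec φ = 0) (hC : ((Cmat N₁ N₂ T)ᵀ).mulVec φ = 0) : φ = 0 := by
  have hd : ∀ i j t, φ (Sum.inl (i, t)) + (φ (Sum.inr (Sum.inl (j, t)))
      + φ (Sum.inr (Sum.inr (i, j)))) = 0 := by
    intro i j t
    have h := congrFun hD (i, j, t)
    simpa [Matrix.mulVec, dotProduct, Dmat, Fintype.sum_sum_type, Fintype.sum_prod_type,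
      ite_and] using h
  let i₀ : Fin N₁ := ⟨0, h₁⟩
  let j₀ : Fin N₂ := ⟨0, h₂⟩
  let t₀ : Fin T := ⟨0, hT⟩
  let ξ : Fin T ⊕ Fin N₁ ⊕ Fin N₂ → ℝ := fun s =>
    match s with
    | Sum.inl t => -φ (Sum.inr (Sum.inl (j₀, t)))
    | Sum.inr (Sum.inl i) => -φ (Sum.inr (Sum.inr (i, j₀)))
    | Sum.inr (Sum.inr j) => φ (Sum.inr (Sum.inl (j, t₀))) - φ (Sum.inr (Sum.inl (j₀, t₀)))
  have hξ : (Cmat N₁ N₂ T).mulVec ξ = φ := by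
    funext s
    rcases s with ⟨i, t⟩ | ⟨j, t⟩ | ⟨i, j⟩
    · have e1 := hd i j₀ t
      simp [Matrix.mulVec, dotProduct, Cmat, Fintype.sum_sum_type, ξ]
      linarith
    · have e1 := hd i₀ j t
      have e2 := hd i₀ j t₀
      have e3 := hd i₀ j₀ t
      have e4 := hd i₀ j₀ t₀
      simp [Matrix.mulVec, dotProduct, Cmat, Fintype.sum_sum_type, ξ]
      linarith
    · have e1 := hd i j t₀
      have e2 := hd i j₀ t₀
      simp [Matrix.mulVec, dotProduct, Cmat, Fintype.sum_sum_type, ξ]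
      linarith
  have h0 : φ ⬝ᵥ φ = 0 := by
    calc φ ⬝ᵥ φ = φ ⬝ᵥ (Cmat N₁ N₂ T).mulVec ξ := by rw [hξ]
      _ = 0 := by rw [Matrix.dotProduct_mulVec, ← Matrix.mulVec_transpose, hC, zero_dotProduct]
  exact dotProduct_self_eq_zero.mp h0

/-- `Dᵀ D + C Cᵀ` is positive definite; equivalently, `D φ = 0` and `Cᵀ φ = 0`
imply `φ = 0`. -/
theorem stmt_14 (N₁ N₂ T : ℕ) (h₁ : 0 < N₁) (h₂ : 0 < N₂) (hT : 0 < T) :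
    ((Dmat N₁ N₂ T)ᵀ * Dmat N₁ N₂ T + Cmat N₁ N₂ T * (Cmat N₁ N₂ T)ᵀ).PosDef ∧
      ∀ φ : ((Fin N₁ × Fin T) ⊕ (Fin N₂ × Fin T) ⊕ (Fin N₁ × Fin N₂)) → ℝ,
        (Dmat N₁ N₂ T).mulVec φ = 0 → ((Cmat N₁ N₂ T)ᵀ).mulVec φ = 0 → φ = 0 := by
  refine ⟨?_, aux_inj N₁ N₂ T h₁ h₂ hT⟩
  refine Matrix.PosDef.of_dotProduct_mulVec_pos ?_ ?_
  · simp [Matrix.IsHermitian, Matrix.conjTranspose_eq_transpose_of_trivial]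
  · intro x hx
    have e : star x ⬝ᵥ ((Dmat N₁ N₂ T)ᵀ * Dmat N₁ N₂ T
        + Cmat N₁ N₂ T * (Cmat N₁ N₂ T)ᵀ).mulVec x
        = (Dmat N₁ N₂ T).mulVec x ⬝ᵥ (Dmat N₁ N₂ T).mulVec x
        + ((Cmat N₁ N₂ T)ᵀ).mulVec x ⬝ᵥ ((Cmat N₁ N₂ T)ᵀ).mulVec x := by
      rw [star_trivial, Matrix.add_mulVec, dotProduct_add, ← Matrix.mulVec_mulVec,
        ← Matrix.mulVec_mulVec, Matrix.dotProduct_mulVec, Matrix.dotProduct_mulVec x (Cmat N₁ N₂ T),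
        Matrix.vecMul_transpose, Matrix.mulVec_transpose]
    rw [e]
    have p1 : 0 ≤ (Dmat N₁ N₂ T).mulVec x ⬝ᵥ (Dmat N₁ N₂ T).mulVec x :=
      Finset.sum_nonneg fun i _ => mul_self_nonneg _
    have p2 : 0 ≤ ((Cmat N₁ N₂ T)ᵀ).mulVec x ⬝ᵥ ((Cmat N₁ N₂ T)ᵀ).mulVec x :=
      Finset.sum_nonneg fun i _ => mul_self_nonneg _
    by_contra hn
    exact hx (aux_inj N₁ N₂ T h₁ h₂ hT x (dotProduct_self_eq_zero.mp (by linarith))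
      (dotProduct_self_eq_zero.mp (by linarith)))
end

section
/- Let n be a positive integer, let K ⊆ ℝ^n be a nonempty compact set, and let f : ℝ^n → ℝ be continuous. Define the Legendre-type transform f* : ℝ^n → ℝ by f*(υ) = max_{φ ∈ K} ( ⟨υ, φ⟩ − f(φ) ). Suppose that at a point υ₀ ∈ ℝ^n the maximizer is unique, i.e. there is exactly one φ₀ ∈ K with f*(υ₀) = ⟨υ₀, φ₀⟩ − f(φ₀). Then f* is Fréchet differentiable at υ₀ and its gradient there equals φ₀, i.e. ∇f*(υ₀) = φ₀. -/
open scoped RealInnerProductSpace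

/-- The Legendre-type transform `f*(υ) = max_{φ ∈ K} (⟨υ, φ⟩ − f(φ))` of a
function `f` over a set `K`. -/
noncomputable def legendreTransform {n : ℕ} (K : Set (EuclideanSpace ℝ (Fin n)))
    (f : EuclideanSpace ℝ (Fin n) → ℝ) (υ : EuclideanSpace ℝ (Fin n)) : ℝ :=
  sSup ((fun φ => ⟪υ, φ⟫ - f φ) '' K)

/-- Danskin-type differentiability: if the maximizer defining `f*(υ₀)` is
unique and equals `φ₀`, then `f*` is (Fréchet) differentiable at `υ₀` with
gradient `φ₀`. -/
theorem stmt_16 (n : ℕ) (hn : 0 < n) (K : Set (EuclideanSpace ℝ (Fin n)))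
    (hK : IsCompact K) (hKne : K.Nonempty)
    (f : EuclideanSpace ℝ (Fin n) → ℝ) (hf : Continuous f)
    (υ₀ φ₀ : EuclideanSpace ℝ (Fin n)) (hφ₀K : φ₀ ∈ K)
    (hmax : legendreTransform K f υ₀ = ⟪υ₀, φ₀⟫ - f φ₀)
    (huniq : ∀ φ ∈ K, legendreTransform K f υ₀ = ⟪υ₀, φ⟫ - f φ → φ = φ₀) :
    HasGradientAt (legendreTransform K f) φ₀ υ₀ := by
  have hcont : ∀ υ : EuclideanSpace ℝ (Fin n),
      Continuous (fun φ : EuclideanSpace ℝ (Fin n) => ⟪υ, φ⟫ - f φ) := fun υ => by fun_prop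
  have hle : ∀ υ, ∀ φ ∈ K, ⟪υ, φ⟫ - f φ ≤ legendreTransform K f υ := fun υ φ hφ =>
    le_csSup (hK.image (hcont υ)).bddAbove ⟨φ, hφ, rfl⟩
  have hatt : ∀ υ, ∃ φ ∈ K, ⟪υ, φ⟫ - f φ = legendreTransform K f υ := fun υ =>
    (hK.image (hcont υ)).sSup_mem (hKne.image _)
  obtain ⟨C, hC⟩ := hK.isBounded.exists_norm_le
  have hgap : ∀ ε > 0, ∃ δ > 0, ∀ φ ∈ K, ε ≤ ‖φ - φ₀‖ →
      ⟪υ₀, φ⟫ - f φ + δ ≤ ⟪υ₀, φ₀⟫ - f φ₀ := by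
    intro ε hε
    have hK' : IsCompact (K ∩ {φ | ε ≤ ‖φ - φ₀‖}) :=
      hK.inter_right (isClosed_le continuous_const (by fun_prop))
    rcases (K ∩ {φ | ε ≤ ‖φ - φ₀‖}).eq_empty_or_nonempty with he | hne
    · refine ⟨1, one_pos, fun φ hφ h => ?_⟩
      have : φ ∈ K ∩ {φ | ε ≤ ‖φ - φ₀‖} := ⟨hφ, h⟩
      rw [he] at this
      exact this.elim
    · obtain ⟨φ₁, ⟨h1K, h1ε⟩, h1⟩ := hK'.exists_isMaxOn hne (hcont υ₀).continuousOn
      refine ⟨(⟪υ₀, φ₀⟫ - f φ₀) - (⟪υ₀, φ₁⟫ - f φ₁), ?_, fun φ hφ h => ?_⟩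
      · have h2 := hle υ₀ φ₁ h1K
        rw [hmax] at h2
        rcases h2.lt_or_eq with h3 | h3
        · exact sub_pos.2 h3
        · have h4 := huniq φ₁ h1K (by rw [hmax, h3])
          rw [Set.mem_setOf_eq, h4] at h1ε
          simp at h1ε
          linarith
      · have h2 : ⟪υ₀, φ⟫ - f φ ≤ ⟪υ₀, φ₁⟫ - f φ₁ := h1 ⟨hφ, h⟩
        linarith
  rw [hasGradientAt_iff_isLittleO, Asymptotics.isLittleO_iff]
  intro ε hε
  obtain ⟨δ, hδ, hg⟩ := hgap ε hε
  have hC0 : 0 ≤ C := (norm_nonneg _).trans (hC φ₀ hφ₀K)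
  have hr : 0 < δ / (2 * C + 1) := by positivity
  filter_upwards [Metric.ball_mem_nhds υ₀ hr] with υ hυ
  rw [mem_ball_iff_norm, lt_div_iff₀ (by positivity)] at hυ
  obtain ⟨φ, hφ, hφe⟩ := hatt υ
  have h0 := hle υ φ₀ hφ₀K
  have h1 := hle υ₀ φ hφ
  have hcs := real_inner_le_norm (υ - υ₀) (φ - φ₀)
  have hexp : ⟪υ - υ₀, φ - φ₀⟫ = ⟪υ, φ⟫ - ⟪υ, φ₀⟫ - ⟪υ₀, φ⟫ + ⟪υ₀, φ₀⟫ := by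
    simp only [inner_sub_left, inner_sub_right]; ring
  have hexp2 : ⟪φ₀, υ - υ₀⟫ = ⟪υ, φ₀⟫ - ⟪υ₀, φ₀⟫ := by
    rw [real_inner_comm, inner_sub_left]
  have hn2 : ‖φ - φ₀‖ ≤ 2 * C := by
    have := norm_sub_le φ φ₀
    have := hC φ hφ
    have := hC φ₀ hφ₀K
    linarith
  have hclose : ‖φ - φ₀‖ ≤ ε := by
    by_contra! hcon
    have h2 := hg φ hφ hcon.le
    have h3 := mul_le_mul_of_nonneg_left hn2 (norm_nonneg (υ - υ₀))
    have h4 := norm_nonneg (υ - υ₀)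
    linarith
  have h5 := mul_le_mul_of_nonneg_left hclose (norm_nonneg (υ - υ₀))
  rw [hexp2, Real.norm_eq_abs, abs_of_nonneg (by linarith)]
  linarith
end

section
/- Let r be a positive integer and let δ, φ, c, C be real numbers with 2r < δ, r/(1 − 2r/δ) < φ, 0 ≤ c < ∞, and 0 ≤ C < ∞. Then there exists a constant B < ∞, depending only on r, δ, φ, c, and C, such that for every probability space and every real-valued stochastic process (ξ_t)_{t ≥ 1} on it satisfying (a) E[ξ_t] = 0 for all t, (b) sup_t E|ξ_t|^δ ≤ C, and (c) the strong mixing coefficients of (ξ_t) satisfy α(h) ≤ c · h^{−φ} for every positive integer h, one has, for every positive integer T, E[ ( T^{−1/2} Σ_{t=1}^T ξ_t )^{2r} ] ≤ B. -/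
open MeasureTheory

/-- The strong (α-)mixing coefficient of a real-valued process `ξ` at lag `h`:
`α(h) = sup_t sup { |P(A ∩ B) − P(A)P(B)| : A ∈ σ(ξ_s : s ≤ t), B ∈ σ(ξ_s : s ≥ t + h) }`. -/
noncomputable def alphaMix {Ω : Type*} [MeasurableSpace Ω] (μ : Measure Ω)
    (ξ : ℕ → Ω → ℝ) (h : ℕ) : ℝ :=
  sSup {x : ℝ | ∃ t : ℕ, ∃ A B : Set Ω,
    MeasurableSet[⨆ s ∈ Set.Iic t, MeasurableSpace.comap (ξ s) inferInstance] A ∧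
    MeasurableSet[⨆ s ∈ Set.Ici (t + h), MeasurableSpace.comap (ξ s) inferInstance] B ∧
    x = |(μ (A ∩ B)).toReal - (μ A).toReal * (μ B).toReal|}


lemma mix_step {Ω : Type*} {m m0 : MeasurableSpace Ω} (hm : m ≤ m0) (μ : Measure Ω)
    [IsProbabilityMeasure μ] (X Y : Ω → ℝ) (hX : Measurable[m] X) (M : ℝ)
    (hXM : ∀ ω, |X ω| ≤ M) (hY : Integrable Y μ) (κ : ℝ)
    (h : ∀ S, MeasurableSet[m] S → |∫ ω in S, Y ω ∂μ| ≤ κ) :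
    |∫ ω, X ω * Y ω ∂μ| ≤ 2 * M * κ := by
  have hXs : StronglyMeasurable[m] X := hX.stronglyMeasurable
  have hX0 : AEStronglyMeasurable X μ := (hXs.mono hm).aestronglyMeasurable
  obtain ⟨ω0⟩ : Nonempty Ω := μ.nonempty_of_neZero
  have hM : 0 ≤ M := (abs_nonneg _).trans (hXM ω0)
  have hXY : Integrable (fun ω => X ω * Y ω) μ :=
    hY.bdd_mul hX0 (Filter.Eventually.of_forall hXM)
  have e1 : ∫ ω, X ω * Y ω ∂μ = ∫ ω, X ω * (μ[Y|m]) ω ∂μ := by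
    rw [← integral_condExp hm (f := fun ω => X ω * Y ω)]
    exact integral_congr_ae (condExp_mul_of_stronglyMeasurable_left hXs hXY hY)
  set g := μ[Y|m] with hg
  have hgi : Integrable g μ := integrable_condExp
  have hgm : Measurable[m] g := stronglyMeasurable_condExp.measurable
  have hS : MeasurableSet[m] {ω | 0 ≤ g ω} := measurableSet_le measurable_const hgm
  have e2 : |∫ ω, X ω * g ω ∂μ| ≤ ∫ ω, M * |g ω| ∂μ := by
    rw [← Real.norm_eq_abs]
    refine (norm_integral_le_integral_norm _).trans ?_
    refine integral_mono_of_nonneg (Filter.Eventually.of_forall fun ω => norm_nonneg _)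
      (hgi.abs.const_mul M) (Filter.Eventually.of_forall fun ω => ?_)
    simp only [Real.norm_eq_abs, abs_mul]
    exact mul_le_mul_of_nonneg_right (hXM ω) (abs_nonneg _)
  have e3 : ∫ ω, |g ω| ∂μ ≤ 2 * κ := by
    have hS0 := hm _ hS
    rw [← integral_add_compl hS0 hgi.abs]
    have a1 : ∫ ω in {ω | 0 ≤ g ω}, |g ω| ∂μ = ∫ ω in {ω | 0 ≤ g ω}, Y ω ∂μ := by
      rw [← setIntegral_condExp hm hY hS]
      exact setIntegral_congr_fun hS0 fun ω hω => abs_of_nonneg hω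
    have a2 : ∫ ω in {ω | 0 ≤ g ω}ᶜ, |g ω| ∂μ = - ∫ ω in {ω | 0 ≤ g ω}ᶜ, Y ω ∂μ := by
      rw [← setIntegral_condExp hm hY hS.compl, ← integral_neg]
      refine setIntegral_congr_fun hS0.compl fun ω hω => abs_of_neg ?_
      simpa using hω
    rw [a1, a2]
    have b1 := (abs_le.1 (h _ hS)).2
    have b2 := (abs_le.1 (h _ hS.compl)).1
    linarith
  rw [e1]
  refine e2.trans ?_
  rw [integral_const_mul]
  nlinarith

lemma mix_cov {Ω : Type*} {m m' m0 : MeasurableSpace Ω} (hm : m ≤ m0) (hm' : m' ≤ m0)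
    (μ : Measure Ω)
    [IsProbabilityMeasure μ] (X Y : Ω → ℝ) (hX : Measurable[m] X) (hY : Measurable[m'] Y) (M N a : ℝ)
    (hXM : ∀ ω, |X ω| ≤ M) (hYN : ∀ ω, |Y ω| ≤ N)
    (h : ∀ S U, MeasurableSet[m] S → MeasurableSet[m'] U →
      |μ.real (S ∩ U) - μ.real S * μ.real U| ≤ a) :
    |∫ ω, X ω * Y ω ∂μ - (∫ ω, X ω ∂μ) * ∫ ω, Y ω ∂μ| ≤ 4 * M * N * a := by
  have hX0 : AEStronglyMeasurable X μ := (hX.mono hm le_rfl).aestronglyMeasurable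
  have hY0 : AEStronglyMeasurable Y μ := (hY.mono hm' le_rfl).aestronglyMeasurable
  have hXi : Integrable X μ := Integrable.of_bound hX0 M (Filter.Eventually.of_forall hXM)
  have hYi : Integrable Y μ := Integrable.of_bound hY0 N (Filter.Eventually.of_forall hYN)
  have hXY : Integrable (fun ω => X ω * Y ω) μ :=
    hYi.bdd_mul hX0 (Filter.Eventually.of_forall hXM)
  have key := mix_step hm μ X (fun ω => Y ω - ∫ ω, Y ω ∂μ) hX M hXM
    (hYi.sub (integrable_const _)) (2 * N * a) ?_
  · have : ∫ ω, X ω * (Y ω - ∫ ω, Y ω ∂μ) ∂μ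
        = ∫ ω, X ω * Y ω ∂μ - (∫ ω, X ω ∂μ) * ∫ ω, Y ω ∂μ := by
      simp only [mul_sub]
      rw [integral_sub hXY (hXi.mul_const _), integral_mul_const]
    rw [← this]
    linarith
  · intro S hS
    have hS0 := hm _ hS
    have hind : Integrable (S.indicator (fun _ => (1:ℝ))) μ := (integrable_const _).indicator hS0
    have k2 := mix_step hm' μ Y (fun ω => S.indicator (fun _ => (1:ℝ)) ω - μ.real S) hY N hYN
      (hind.sub (integrable_const _)) a ?_
    · have : ∫ ω, Y ω * (S.indicator (fun _ => (1:ℝ)) ω - μ.real S) ∂μ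
          = ∫ ω in S, (Y ω - ∫ ω, Y ω ∂μ) ∂μ := by
        simp only [mul_sub]
        have e : (fun ω => Y ω * S.indicator (fun _ => (1:ℝ)) ω) = S.indicator Y := by
          ext ω; by_cases hω : ω ∈ S <;> simp [hω]
        rw [integral_sub (by rw [e]; exact hYi.indicator hS0) (hYi.mul_const _), e,
          integral_indicator hS0, integral_sub hYi.integrableOn (integrable_const _),
          integral_mul_const]
        simp [mul_comm]
      rw [← this]
      exact k2
    · intro U hU
      have hU0 := hm' _ hU
      rw [integral_sub hind.integrableOn (integrable_const _), integral_indicator hS0]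
      simp only [integral_const, smul_eq_mul, mul_one, Measure.real, Measure.restrict_apply_univ,
        Measure.restrict_restrict hS0]
      have := h S U hS hU
      simp only [Measure.real] at this
      rwa [mul_comm ((μ U).toReal)]

/-- truncation -/
noncomputable def trunc (M x : ℝ) : ℝ := max (-M) (min x M)

lemma trunc_le (M x : ℝ) (hM : 0 ≤ M) : |trunc M x| ≤ M := by
  unfold trunc
  rw [abs_le]; constructor
  · exact le_max_left _ _
  · exact max_le (by linarith) (min_le_right _ _)

lemma trunc_le' (M x : ℝ) (hM : 0 ≤ M) : |trunc M x| ≤ |x| := by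
  unfold trunc
  rw [abs_le]; constructor
  · rcases le_total 0 x with h | h
    · exact (neg_nonpos.2 (abs_nonneg x)).trans (le_max_of_le_right (le_min h hM))
    · rw [abs_of_nonpos h, neg_neg]
      exact le_max_of_le_right (le_min le_rfl (h.trans hM))
  · exact max_le (by linarith [abs_nonneg x]) ((min_le_left _ _).trans (le_abs_self x))

lemma trunc_eq (M x : ℝ) (h : |x| ≤ M) : trunc M x = x := by
  unfold trunc
  rw [abs_le] at h
  rw [min_eq_left h.2, max_eq_right h.1]

lemma measurable_trunc (M : ℝ) : Measurable (trunc M) := by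
  unfold trunc; fun_prop

/-- either all small, or the product bounded -/
lemma prod_dich {ι : Type*} [Fintype ι] (x : ι → ℝ) (M δ : ℝ) (hM : 1 ≤ M)
    (hn : (Fintype.card ι : ℝ) ≤ δ) :
    (∀ i, |x i| ≤ M) ∨
      ∏ i, |x i| ≤ M ^ ((Fintype.card ι : ℝ) - δ) * ∑ i, |x i| ^ δ := by
  by_contra! hcon
  obtain ⟨⟨i, hi⟩, h2⟩ := hcon
  refine absurd h2 (not_lt.2 ?_)
  obtain ⟨j, -, hj⟩ := Finset.exists_max_image Finset.univ (fun i => |x i|) ⟨i, Finset.mem_univ _⟩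
  have hZ : M < |x j| := hi.trans_le (hj i (Finset.mem_univ _))
  have hZ0 : 0 < |x j| := by linarith
  calc ∏ i, |x i| ≤ ∏ _i : ι, |x j| :=
        Finset.prod_le_prod (fun _ _ => abs_nonneg _) (fun i hi => hj i hi)
    _ = |x j| ^ ((Fintype.card ι : ℝ) - δ) * |x j| ^ δ := by
        rw [← Real.rpow_add hZ0]; simp
    _ ≤ M ^ ((Fintype.card ι : ℝ) - δ) * ∑ i, |x i| ^ δ := by
        refine mul_le_mul ?_ ?_ (by positivity) (by positivity)
        · exact Real.rpow_le_rpow_of_nonpos (by linarith) hZ.le (by linarith)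
        · exact Finset.single_le_sum (f := fun i => |x i| ^ δ)
            (fun i _ => Real.rpow_nonneg (abs_nonneg _) _) (Finset.mem_univ j)

lemma prod_bd {ι : Type*} [Fintype ι] (x : ι → ℝ) (M δ : ℝ) (hM : 1 ≤ M)
    (hn : (Fintype.card ι : ℝ) ≤ δ) :
    |∏ i, x i| ≤ M ^ (Fintype.card ι) + M ^ ((Fintype.card ι : ℝ) - δ) * ∑ i, |x i| ^ δ := by
  rw [Finset.abs_prod]
  have h0 : 0 ≤ M ^ ((Fintype.card ι : ℝ) - δ) * ∑ i, |x i| ^ δ := by positivity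
  have h1 : 0 ≤ M ^ (Fintype.card ι) := by positivity
  rcases prod_dich x M δ hM hn with h | h
  · have : ∏ i, |x i| ≤ ∏ _i : ι, M :=
      Finset.prod_le_prod (fun _ _ => abs_nonneg _) (fun i hi => h i)
    simp at this
    linarith
  · linarith

lemma prod_trunc {ι : Type*} [Fintype ι] (x : ι → ℝ) (M δ : ℝ) (hM : 1 ≤ M)
    (hn : (Fintype.card ι : ℝ) ≤ δ) :
    |∏ i, x i - ∏ i, trunc M (x i)| ≤ 2 * M ^ ((Fintype.card ι : ℝ) - δ) * ∑ i, |x i| ^ δ := by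
  have h0 : 0 ≤ M ^ ((Fintype.card ι : ℝ) - δ) * ∑ i, |x i| ^ δ := by positivity
  rcases prod_dich x M δ hM hn with h | h
  · simp only [fun i => trunc_eq M (x i) (h i), sub_self, abs_zero]
    linarith
  · have h2 : ∏ i, |trunc M (x i)| ≤ ∏ i, |x i| :=
      Finset.prod_le_prod (fun _ _ => abs_nonneg _) (fun i _ => trunc_le' _ _ (by linarith))
    have := abs_sub (∏ i, x i) (∏ i, trunc M (x i))
    rw [Finset.abs_prod, Finset.abs_prod] at this
    linarith

/-- gap lemma -/
lemma exists_gap (n : ℕ) (hn : 2 ≤ n) (ι : Type) [Fintype ι] (hι : Fintype.card ι = n)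
    (f : ι → ℕ) : ∃ i j, i ≠ j ∧ f i ≤ f j ∧ (∀ k, f k ≤ f i ∨ f j ≤ f k) ∧
      ∀ k, f k ≤ f i + n * (f j - f i) ∧ f i ≤ f k + n * (f j - f i) := by
  obtain ⟨e⟩ : Nonempty (ι ≃ Fin n) := ⟨Fintype.equivFinOfCardEq hι⟩
  set s := Tuple.sort (f ∘ e.symm)
  have hg : Monotone ((f ∘ e.symm) ∘ s) := Tuple.monotone_sort _
  set g := (f ∘ e.symm) ∘ s with hgdef
  set G : ℕ → ℕ := fun k => g ⟨min k (n-1), by omega⟩ with hG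
  have hGm : Monotone G := fun a b hab => hg (by
    rw [Fin.mk_le_mk]; omega)
  obtain ⟨a, ha, hmax⟩ := Finset.exists_max_image (Finset.range (n-1)) (fun k => G (k+1) - G k)
    ⟨0, by simp; omega⟩
  have ha' : a < n - 1 := by simpa using ha
  set H := G (a+1) - G a with hH
  have hstep : ∀ k, G (k+1) ≤ G k + H := by
    intro k
    by_cases hk : k < n - 1
    · have := hmax k (by simpa using hk)
      omega
    · have : G (k+1) = G k := by
        simp only [hG]; congr 2; omega
      omega
  have hlin : ∀ d k, G (k+d) ≤ G k + d * H := by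
    intro d
    induction d with
    | zero => intro k; simp
    | succ d ih => intro k
                   have := hstep (k+d)
                   have := ih k
                   rw [add_mul, ← add_assoc]; omega
  have hfG : ∀ k : ι, ∃ b, b < n ∧ f k = G b := by
    intro k
    refine ⟨(s.symm (e k)), (s.symm (e k)).2, ?_⟩
    have : (⟨min (s.symm (e k)) (n-1), by omega⟩ : Fin n) = s.symm (e k) := by
      ext; simp; omega
    simp only [hG, this, hgdef]
    simp
  have hlt : ∀ b, (hb : b < n) → f (e.symm (s ⟨b, hb⟩)) = G b := by
    intro b hb
    have : (⟨min b (n-1), by omega⟩ : Fin n) = ⟨b, hb⟩ := by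
      ext; simp; omega
    simp only [hG, this, hgdef]
    simp
  refine ⟨e.symm (s ⟨a, by omega⟩), e.symm (s ⟨a+1, by omega⟩), ?_, ?_, ?_, ?_⟩
  · simp
  · rw [hlt, hlt]; exact hGm (by omega)
  · intro k
    obtain ⟨b, hb, hk⟩ := hfG k
    rw [hlt, hlt, hk]
    rcases le_or_gt b a with h | h
    · left; exact hGm h
    · right; exact hGm h
  · intro k
    obtain ⟨b, hb, hk⟩ := hfG k
    rw [hlt, hlt, hk, ← hH]
    constructor
    · rcases le_or_gt b a with h | h
      · have := hGm h; omega
      · have h1 := hlin (b - a) a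
        rw [Nat.add_sub_cancel' h.le] at h1
        have h2 : (b-a) * H ≤ n * H := Nat.mul_le_mul_right _ (by omega)
        omega
    · rcases le_or_gt a b with h | h
      · have := hGm h; omega
      · have h1 := hlin (a - b) b
        rw [Nat.add_sub_cancel' h.le] at h1
        have h2 : (a-b) * H ≤ n * H := Nat.mul_le_mul_right _ (by omega)
        omega

lemma count_fiber (n : ℕ) (ι : Type) [Fintype ι] [DecidableEq ι]
    (hι : Fintype.card ι = n) (T : ℕ) (i j : ι) (hij : i ≠ j) (x y : Fin T) (h : ℕ) :
    (Finset.univ.filter (fun f : ι → Fin T => (f i = x ∧ f j = y) ∧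
      ∀ k, (f k : ℕ) ≤ x + n * h ∧ (x : ℕ) ≤ f k + n * h)).card ≤ (2 * n * h + 1) ^ (n - 2) := by
  classical
  set W : Finset (Fin T) := Finset.univ.filter
    (fun z : Fin T => (z : ℕ) ≤ x + n * h ∧ (x : ℕ) ≤ z + n * h) with hW
  have hWc : W.card ≤ 2 * n * h + 1 := by
    have h1 : W.card ≤ (Finset.Icc ((x : ℕ) - n * h) (x + n * h)).card := by
      refine Finset.card_le_card_of_injOn (fun z => (z : ℕ)) ?_ ?_
      · intro z hz
        simp [hW] at hz
        simp
        omega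
      · intro a _ b _ hab
        exact Fin.ext hab
    rw [Nat.card_Icc] at h1
    have : 2 * n * h = n * h + n * h := by ring
    omega
  have hsub : (Finset.univ.filter (fun f : ι → Fin T => (f i = x ∧ f j = y) ∧
      ∀ k, (f k : ℕ) ≤ x + n * h ∧ (x : ℕ) ≤ f k + n * h)) ⊆
      Fintype.piFinset (fun k => if k = i then {x} else if k = j then {y} else W) := by
    intro f hf
    simp only [Finset.mem_filter, Finset.mem_univ, true_and] at hf
    rw [Fintype.mem_piFinset]
    intro k
    split_ifs with h1 h2
    · subst h1; simp [hf.1.1]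
    · subst h2; simp [hf.1.2]
    · simp [hW, hf.2 k]
  refine (Finset.card_le_card hsub).trans ?_
  rw [Fintype.card_piFinset]
  calc _ ≤ ∏ k : ι, (if k ∈ ({i, j} : Finset ι) then 1 else (2 * n * h + 1)) := by
        refine Finset.prod_le_prod' fun k _ => ?_
        by_cases h1 : k = i
        · simp [h1]
        · by_cases h2 : k = j
          · subst h2; simp [h1]
          · simpa [h1, h2] using hWc
    _ = _ := by
        rw [Finset.prod_ite]
        simp only [Finset.prod_const_one, Finset.prod_const, one_mul]
        congr 1
        have : (Finset.univ.filter (fun k => k ∉ ({i, j} : Finset ι))) = ({i, j} : Finset ι)ᶜ := by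
          ext; simp
        rw [this, Finset.card_compl, hι, Finset.card_pair hij]

lemma count_sum (n : ℕ) (hn : 2 ≤ n) (θ : ℝ) (hθ : (n : ℝ) / 2 < θ) :
    ∃ K : ℝ, 0 ≤ K ∧ ∀ (ι : Type) [Fintype ι] [DecidableEq ι], Fintype.card ι = n →
      ∀ T : ℕ, 0 < T → ∀ i j : ι, i ≠ j →
      ∑ f : ι → Fin T, (if (f i : ℕ) ≤ f j ∧
          (∀ k, (f k : ℕ) ≤ f i + n * (f j - f i) ∧ (f i : ℕ) ≤ f k + n * (f j - f i))
          then ((((f j : ℕ) - f i : ℕ) : ℝ) + 1) ^ (-θ) else 0) ≤ K * (T : ℝ) ^ ((n : ℝ) / 2) := by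
  have hsum : Summable (fun h : ℕ => ((h : ℝ) + 1) ^ ((n : ℝ) / 2 - 1 - θ)) := by
    have := (summable_nat_add_iff 1).2
      (Real.summable_nat_rpow (p := (n : ℝ) / 2 - 1 - θ).2 (by linarith))
    simpa using this
  have hpos : ∀ h : ℕ, 0 ≤ ((h : ℝ) + 1) ^ ((n : ℝ) / 2 - 1 - θ) := fun h => by positivity
  refine ⟨(2 * n) ^ (n - 2) * ∑' h : ℕ, ((h : ℝ) + 1) ^ ((n : ℝ) / 2 - 1 - θ),
    mul_nonneg (by positivity) (tsum_nonneg hpos), ?_⟩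
  intro ι _ _ hι T hT i j hij
  have hT0 : (0 : ℝ) < T := by exact_mod_cast hT
  set u : ℕ → ℝ := fun h => (2 * (n : ℝ)) ^ (n - 2) * (T : ℝ) ^ ((n : ℝ) / 2 - 1) *
    ((h : ℝ) + 1) ^ ((n : ℝ) / 2 - 1 - θ) with hu
  have hu0 : ∀ h, 0 ≤ u h := fun h => by positivity
  have hn2 : (2 : ℝ) ≤ n := by exact_mod_cast hn
  have hterm : ∀ h : ℕ, h < T →
      ((2 * n * h + 1 : ℕ) : ℝ) ^ (n - 2) * ((h : ℝ) + 1) ^ (-θ) ≤ u h := by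
    intro h hh
    have h1 : (0 : ℝ) < (h : ℝ) + 1 := by positivity
    have e1 : ((2 * n * h + 1 : ℕ) : ℝ) ^ (n - 2) ≤ (2 * (n : ℝ)) ^ (n - 2) * ((h : ℝ) + 1) ^ ((n : ℝ) - 2) := by
      have : ((h : ℝ) + 1) ^ ((n : ℝ) - 2) = ((h : ℝ) + 1) ^ (n - 2) := by
        rw [← Real.rpow_natCast]; congr 1; push_cast [hn]; ring
      rw [this, ← mul_pow]
      gcongr
      push_cast
      nlinarith
    calc _ ≤ (2 * (n : ℝ)) ^ (n - 2) * ((h : ℝ) + 1) ^ ((n : ℝ) - 2) * ((h : ℝ) + 1) ^ (-θ) := by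
            gcongr
      _ = (2 * (n : ℝ)) ^ (n - 2) * ((h : ℝ) + 1) ^ ((n : ℝ) / 2 - 1) *
            ((h : ℝ) + 1) ^ ((n : ℝ) / 2 - 1 - θ) := by
            rw [mul_assoc, mul_assoc, ← Real.rpow_add h1, ← Real.rpow_add h1]; congr 2; ring
      _ ≤ u h := by
            simp only [hu]
            have : (h : ℝ) + 1 ≤ T := by exact_mod_cast hh
            gcongr
            linarith
  rw [← Finset.sum_fiberwise Finset.univ (fun f : ι → Fin T => (f i, f j))]
  rw [Fintype.sum_prod_type]
  have hin : ∀ x : Fin T, ∑ y : Fin T, ∑ f : ι → Fin T with (f i, f j) = (x, y),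
      (if (f i : ℕ) ≤ f j ∧
          (∀ k, (f k : ℕ) ≤ f i + n * (f j - f i) ∧ (f i : ℕ) ≤ f k + n * (f j - f i))
          then ((((f j : ℕ) - f i : ℕ) : ℝ) + 1) ^ (-θ) else 0) ≤ ∑ h ∈ Finset.range T, u h := by
    intro x
    calc _ ≤ ∑ y : Fin T, (if (x : ℕ) ≤ y then u ((y : ℕ) - x) else 0) := by
          refine Finset.sum_le_sum fun y _ => ?_
          split_ifs with hxy
          · refine le_trans ?_ (hterm ((y : ℕ) - x) (by omega))
            rw [← Finset.sum_filter, Finset.filter_filter]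
            have hc := count_fiber n ι hι T i j hij x y ((y : ℕ) - x)
            refine (Finset.sum_le_card_nsmul _ _ ((((((y : ℕ) - x : ℕ)) : ℝ) + 1) ^ (-θ)) ?_).trans ?_
            · intro f hf
              simp only [Finset.mem_filter, Prod.mk.injEq] at hf
              rw [hf.2.1.1, hf.2.1.2]
            · rw [nsmul_eq_mul]
              refine mul_le_mul_of_nonneg_right ?_ (by positivity)
              rw [← Nat.cast_pow, Nat.cast_le]
              refine le_trans (Finset.card_le_card ?_) hc
              intro f hf
              simp only [Finset.mem_filter, Prod.mk.injEq, Finset.mem_univ, true_and] at hf ⊢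
              obtain ⟨⟨h1, h2⟩, h3, h4⟩ := hf
              rw [h1, h2] at h4
              exact ⟨⟨h1, h2⟩, h4⟩
          · refine (Finset.sum_eq_zero fun f hf => ?_).le
            simp only [Finset.mem_filter, Prod.mk.injEq, Finset.mem_univ, true_and] at hf
            rw [if_neg]
            rw [hf.1, hf.2]
            tauto
      _ = ∑ y ∈ Finset.range T, (if (x : ℕ) ≤ y then u (y - x) else 0) :=
          Fin.sum_univ_eq_sum_range (fun y => if (x : ℕ) ≤ y then u (y - x) else 0) T
      _ = ∑ y ∈ (Finset.range T).filter (fun y => (x : ℕ) ≤ y), u (y - x) := by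
          rw [Finset.sum_filter]
      _ = ∑ h ∈ ((Finset.range T).filter (fun y => (x : ℕ) ≤ y)).image (fun y => y - (x : ℕ)), u h := by
          rw [Finset.sum_image]
          intro a ha b hb hab
          simp at ha hb hab
          omega
      _ ≤ _ := by
          refine Finset.sum_le_sum_of_subset_of_nonneg ?_ (fun h _ _ => hu0 h)
          intro h hh
          simp at hh ⊢
          omega
  refine (Finset.sum_le_sum fun x _ => hin x).trans ?_
  rw [Finset.sum_const, Finset.card_univ, Fintype.card_fin, nsmul_eq_mul]
  simp only [hu]
  rw [← Finset.mul_sum]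
  have hT1 : (T : ℝ) ^ ((n : ℝ) / 2) = T * (T : ℝ) ^ ((n : ℝ) / 2 - 1) := by
    rw [Real.rpow_sub_one hT0.ne']; field_simp
  have := hsum.sum_le_tsum (Finset.range T) (fun h _ => hpos h)
  rw [hT1]
  calc _ ≤ (T : ℝ) * ((2 * (n : ℝ)) ^ (n - 2) * (T : ℝ) ^ ((n : ℝ) / 2 - 1) *
        ∑' h : ℕ, ((h : ℝ) + 1) ^ ((n : ℝ) / 2 - 1 - θ)) := by gcongr
    _ = _ := by ring

section proc
set_option linter.unusedSectionVars false
variable {Ω : Type} [MeasurableSpace Ω]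

lemma alphaMix_bound (μ : Measure Ω) [IsProbabilityMeasure μ] (ξ : ℕ → Ω → ℝ) (h t : ℕ)
    (A B : Set Ω)
    (hA : MeasurableSet[⨆ s ∈ Set.Iic t, MeasurableSpace.comap (ξ s) inferInstance] A)
    (hB : MeasurableSet[⨆ s ∈ Set.Ici (t + h), MeasurableSpace.comap (ξ s) inferInstance] B) :
    |μ.real (A ∩ B) - μ.real A * μ.real B| ≤ alphaMix μ ξ h := by
  refine le_csSup ⟨1, ?_⟩ ⟨t, A, B, hA, hB, rfl⟩
  rintro x ⟨t, A, B, -, -, rfl⟩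
  change |μ.real (A ∩ B) - μ.real A * μ.real B| ≤ 1
  have h1 : μ.real (A ∩ B) ≤ 1 := measureReal_le_one
  have h2 : μ.real A ≤ 1 := measureReal_le_one
  have h3 : μ.real B ≤ 1 := measureReal_le_one
  have h4 : 0 ≤ μ.real (A ∩ B) := measureReal_nonneg
  have h5 : 0 ≤ μ.real A := measureReal_nonneg
  have h6 : 0 ≤ μ.real B := measureReal_nonneg
  rw [abs_le]; constructor <;> nlinarith

variable (μ : Measure Ω) [IsProbabilityMeasure μ] (ξ : ℕ → Ω → ℝ) (δ C : ℝ)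

lemma mom_int (hm : ∀ t, Measurable (ξ t)) (hC : 0 ≤ C)
    (hmom : ∀ t, ∫⁻ ω, ENNReal.ofReal (|ξ t ω| ^ δ) ∂μ ≤ ENNReal.ofReal C) (t : ℕ) :
    Integrable (fun ω => |ξ t ω| ^ δ) μ ∧ ∫ ω, |ξ t ω| ^ δ ∂μ ≤ C := by
  have hms : Measurable (fun ω => |ξ t ω| ^ δ) := by
    have := hm t
    have h2 : Measurable (fun ω => |ξ t ω|) := this.abs
    exact h2.pow_const δ
  have hnn : ∀ ω, 0 ≤ |ξ t ω| ^ δ := fun ω => Real.rpow_nonneg (abs_nonneg _) _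
  have hi : Integrable (fun ω => |ξ t ω| ^ δ) μ := by
    refine ⟨hms.aestronglyMeasurable, ?_⟩
    rw [hasFiniteIntegral_iff_ofReal (Filter.Eventually.of_forall hnn)]
    exact (hmom t).trans_lt ENNReal.ofReal_lt_top
  refine ⟨hi, ?_⟩
  rw [← ENNReal.ofReal_le_ofReal_iff hC,
    ofReal_integral_eq_lintegral_ofReal hi (Filter.Eventually.of_forall hnn)]
  exact hmom t

variable {ι : Type} [Fintype ι]

lemma int_sum (hm : ∀ t, Measurable (ξ t)) (hC : 0 ≤ C)
    (hmom : ∀ t, ∫⁻ ω, ENNReal.ofReal (|ξ t ω| ^ δ) ∂μ ≤ ENNReal.ofReal C) (f : ι → ℕ) :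
    Integrable (fun ω => ∑ i, |ξ (f i) ω| ^ δ) μ ∧
      ∫ ω, ∑ i, |ξ (f i) ω| ^ δ ∂μ ≤ Fintype.card ι * C := by
  refine ⟨integrable_finsetSum _ fun i _ => (mom_int μ ξ δ C hm hC hmom (f i)).1, ?_⟩
  rw [integral_finsetSum _ fun i _ => (mom_int μ ξ δ C hm hC hmom (f i)).1]
  refine (Finset.sum_le_card_nsmul _ _ C fun i _ => (mom_int μ ξ δ C hm hC hmom (f i)).2).trans ?_
  simp

lemma int_prod (hm : ∀ t, Measurable (ξ t)) (hC : 0 ≤ C)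
    (hmom : ∀ t, ∫⁻ ω, ENNReal.ofReal (|ξ t ω| ^ δ) ∂μ ≤ ENNReal.ofReal C)
    (hn : (Fintype.card ι : ℝ) ≤ δ) (f : ι → ℕ) :
    Integrable (fun ω => ∏ i, ξ (f i) ω) μ := by
  have hs := (int_sum μ ξ δ C hm hC hmom f).1
  refine Integrable.mono' ((integrable_const (1:ℝ)).add hs)
    (Finset.measurable_prod _ fun i _ => hm (f i)).aestronglyMeasurable
    (Filter.Eventually.of_forall fun ω => ?_)
  have := prod_bd (fun i => ξ (f i) ω) 1 δ le_rfl hn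
  rw [Real.norm_eq_abs]
  simpa only [one_pow, Real.one_rpow, one_mul, Pi.add_apply] using this

lemma int_prod_bd (hm : ∀ t, Measurable (ξ t)) (hC : 0 ≤ C)
    (hmom : ∀ t, ∫⁻ ω, ENNReal.ofReal (|ξ t ω| ^ δ) ∂μ ≤ ENNReal.ofReal C)
    (hn : (Fintype.card ι : ℝ) ≤ δ) (f : ι → ℕ) (M : ℝ) (hM : 1 ≤ M) :
    |∫ ω, ∏ i, ξ (f i) ω ∂μ| ≤ M ^ (Fintype.card ι : ℝ) +
      M ^ ((Fintype.card ι : ℝ) - δ) * (Fintype.card ι * C) := by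
  have hs := int_sum μ ξ δ C hm hC hmom f
  have hM0 : 0 ≤ M ^ ((Fintype.card ι : ℝ) - δ) := by positivity
  calc _ ≤ ∫ ω, |∏ i, ξ (f i) ω| ∂μ := abs_integral_le_integral_abs
    _ ≤ ∫ ω, (M ^ (Fintype.card ι : ℝ) +
          M ^ ((Fintype.card ι : ℝ) - δ) * ∑ i, |ξ (f i) ω| ^ δ) ∂μ := by
        refine integral_mono (int_prod μ ξ δ C hm hC hmom hn f).abs
          ((integrable_const _).add (hs.1.const_mul _)) fun ω => ?_
        have := prod_bd (fun i => ξ (f i) ω) M δ hM hn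
        simpa using this
    _ = M ^ (Fintype.card ι : ℝ) +
          M ^ ((Fintype.card ι : ℝ) - δ) * ∫ ω, ∑ i, |ξ (f i) ω| ^ δ ∂μ := by
        rw [integral_add (integrable_const _) (hs.1.const_mul _), integral_const_mul]
        simp
    _ ≤ _ := by
        have := mul_le_mul_of_nonneg_left hs.2 hM0
        linarith

lemma trunc_prod_bd (f : ι → ℕ) (M : ℝ) (hM : 1 ≤ M) (ω : Ω) :
    |∏ i, trunc M (ξ (f i) ω)| ≤ M ^ (Fintype.card ι : ℝ) := by
  rw [Finset.abs_prod]
  refine (Finset.prod_le_prod (fun _ _ => abs_nonneg _)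
    (fun i _ => trunc_le M (ξ (f i) ω) (by linarith))).trans ?_
  simp

lemma int_trunc (hm : ∀ t, Measurable (ξ t)) (f : ι → ℕ) (M : ℝ) (hM : 1 ≤ M) :
    Integrable (fun ω => ∏ i, trunc M (ξ (f i) ω)) μ :=
  Integrable.of_bound (Finset.measurable_prod _ fun i _ =>
    (measurable_trunc M).comp (hm (f i))).aestronglyMeasurable (M ^ (Fintype.card ι : ℝ))
    (Filter.Eventually.of_forall fun ω => trunc_prod_bd ξ f M hM ω)

lemma int_trunc_bd (f : ι → ℕ) (M : ℝ) (hM : 1 ≤ M) :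
    |∫ ω, ∏ i, trunc M (ξ (f i) ω) ∂μ| ≤ M ^ (Fintype.card ι : ℝ) := by
  have := norm_integral_le_of_norm_le_const (μ := μ)
    (f := fun ω => ∏ i, trunc M (ξ (f i) ω)) (C := M ^ (Fintype.card ι : ℝ))
    (Filter.Eventually.of_forall fun ω => trunc_prod_bd ξ f M hM ω)
  rwa [Real.norm_eq_abs, probReal_univ, mul_one] at this

lemma int_trunc_diff (hm : ∀ t, Measurable (ξ t)) (hC : 0 ≤ C)
    (hmom : ∀ t, ∫⁻ ω, ENNReal.ofReal (|ξ t ω| ^ δ) ∂μ ≤ ENNReal.ofReal C)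
    (hn : (Fintype.card ι : ℝ) ≤ δ) (f : ι → ℕ) (M : ℝ) (hM : 1 ≤ M) :
    |∫ ω, ∏ i, ξ (f i) ω ∂μ - ∫ ω, ∏ i, trunc M (ξ (f i) ω) ∂μ| ≤
      2 * M ^ ((Fintype.card ι : ℝ) - δ) * (Fintype.card ι * C) := by
  have hs := int_sum μ ξ δ C hm hC hmom f
  have hM0 : 0 ≤ 2 * M ^ ((Fintype.card ι : ℝ) - δ) := by positivity
  have h1 := int_prod μ ξ δ C hm hC hmom hn f
  have h2 := int_trunc μ ξ hm f M hM
  rw [← integral_sub h1 h2]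
  refine abs_integral_le_integral_abs.trans ?_
  calc _ ≤ ∫ ω, (2 * M ^ ((Fintype.card ι : ℝ) - δ) * ∑ i, |ξ (f i) ω| ^ δ) ∂μ := by
        refine integral_mono (h1.sub h2).abs (hs.1.const_mul _) fun ω => ?_
        exact prod_trunc (fun i => ξ (f i) ω) M δ hM hn
    _ ≤ _ := by
        rw [integral_const_mul]
        exact mul_le_mul_of_nonneg_left hs.2 hM0

lemma trunc_cov (hm : ∀ t, Measurable (ξ t)) (f : ι → ℕ) (M : ℝ) (hM : 1 ≤ M)
    (p : ι → Prop) [DecidablePred p] (t h : ℕ) (hp : ∀ k, p k → f k ≤ t)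
    (hq : ∀ k, ¬ p k → t + h ≤ f k) :
    |∫ ω, ∏ i, trunc M (ξ (f i) ω) ∂μ -
      (∫ ω, ∏ i : {i // p i}, trunc M (ξ (f i) ω) ∂μ) *
        ∫ ω, ∏ i : {i // ¬ p i}, trunc M (ξ (f i) ω) ∂μ| ≤
      4 * M ^ (Fintype.card ι : ℝ) * alphaMix μ ξ h := by
  have hle : ∀ s : Set ℕ, (⨆ k ∈ s, MeasurableSpace.comap (ξ k) inferInstance) ≤
      (inferInstance : MeasurableSpace Ω) :=
    fun s => iSup₂_le fun k _ => (hm k).comap_le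
  have hmm : ∀ (s : Set ℕ) (k : ℕ), k ∈ s →
      Measurable[⨆ k ∈ s, MeasurableSpace.comap (ξ k) inferInstance] (ξ k) := by
    intro s k hk
    exact (comap_measurable (ξ k)).mono
      (le_iSup₂ (f := fun k (_ : k ∈ s) => MeasurableSpace.comap (ξ k) inferInstance) k hk) le_rfl
  have key := mix_cov (hle (Set.Iic t)) (hle (Set.Ici (t + h))) μ
    (fun ω => ∏ i : {i // p i}, trunc M (ξ (f i) ω))
    (fun ω => ∏ i : {i // ¬ p i}, trunc M (ξ (f i) ω))
    (Finset.measurable_prod _ fun i _ => (measurable_trunc M).comp (hmm _ _ (hp i i.2)))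
    (Finset.measurable_prod _ fun i _ => (measurable_trunc M).comp (hmm _ _ (hq i i.2)))
    (M ^ (Fintype.card {i // p i} : ℝ)) (M ^ (Fintype.card {i // ¬ p i} : ℝ)) (alphaMix μ ξ h)
    (fun ω => trunc_prod_bd ξ (fun i : {i // p i} => f i) M hM ω)
    (fun ω => trunc_prod_bd ξ (fun i : {i // ¬ p i} => f i) M hM ω)
    (fun S U hS hU => alphaMix_bound μ ξ h t S U hS hU)
  have hcard : (Fintype.card ι : ℝ) = (Fintype.card {i // p i} : ℝ) + (Fintype.card {i // ¬ p i} : ℝ) := by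
    have h1 := Fintype.card_subtype_compl p
    have h2 := Fintype.card_subtype_le p
    rw [h1, Nat.cast_sub h2]; ring
  rw [hcard, Real.rpow_add (by linarith)]
  have e : ∀ ω, (∏ i : {i // p i}, trunc M (ξ (f i) ω)) * (∏ i : {i // ¬ p i}, trunc M (ξ (f i) ω))
      = ∏ i, trunc M (ξ (f i) ω) := fun ω =>
    Fintype.prod_subtype_mul_prod_subtype p (fun i => trunc M (ξ (f i) ω))
  simp only [e] at key
  linarith

lemma cov_bd (hm : ∀ t, Measurable (ξ t)) (hC : 0 ≤ C)
    (hmom : ∀ t, ∫⁻ ω, ENNReal.ofReal (|ξ t ω| ^ δ) ∂μ ≤ ENNReal.ofReal C)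
    (hn : (Fintype.card ι : ℝ) ≤ δ) (f : ι → ℕ) (M : ℝ) (hM : 1 ≤ M)
    (p : ι → Prop) [DecidablePred p] (t h : ℕ) (hp : ∀ k, p k → f k ≤ t)
    (hq : ∀ k, ¬ p k → t + h ≤ f k) :
    |∫ ω, ∏ i, ξ (f i) ω ∂μ| ≤
      |∫ ω, ∏ i : {i // p i}, ξ (f i) ω ∂μ| * |∫ ω, ∏ i : {i // ¬ p i}, ξ (f i) ω ∂μ| +
      ((4 * (Fintype.card ι * C) + (1 + Fintype.card ι * C) * (2 * (Fintype.card ι * C))) *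
        M ^ ((Fintype.card ι : ℝ) - δ) +
      4 * M ^ (Fintype.card ι : ℝ) * alphaMix μ ξ h) := by
  have hcard : (Fintype.card ι : ℝ) = (Fintype.card {i // p i} : ℝ) + (Fintype.card {i // ¬ p i} : ℝ) := by
    have h1 := Fintype.card_subtype_compl p
    have h2 := Fintype.card_subtype_le p
    rw [h1, Nat.cast_sub h2]; ring
  have hM0 : 0 < M := by linarith
  have c0 := trunc_cov μ ξ hm f M hM p t h hp hq
  have c1 := int_trunc_diff μ ξ δ C hm hC hmom hn f M hM
  set a : ℝ := (Fintype.card {i // p i} : ℝ) with ha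
  set b : ℝ := (Fintype.card {i // ¬ p i} : ℝ) with hb
  set n : ℝ := (Fintype.card ι : ℝ) with hndef
  have ha0 : 0 ≤ a := by positivity
  have hb0 : 0 ≤ b := by positivity
  have cX := int_trunc_diff μ ξ δ C hm hC hmom (ι := {i // p i}) (by linarith) (fun i => f i) M hM
  have cY := int_trunc_diff μ ξ δ C hm hC hmom (ι := {i // ¬ p i}) (by linarith) (fun i => f i) M hM
  have bX := int_prod_bd μ ξ δ C hm hC hmom (ι := {i // p i}) (by linarith) (fun i => f i) M hM
  have bY := int_trunc_bd μ ξ (ι := {i // ¬ p i}) (fun i => f i) M hM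
  rw [← ha] at cX bX
  rw [← hb] at cY bY
  set E := ∫ ω, ∏ i, ξ (f i) ω ∂μ
  set E' := ∫ ω, ∏ i, trunc M (ξ (f i) ω) ∂μ
  set X := ∫ ω, ∏ i : {i // p i}, ξ (f i) ω ∂μ
  set X' := ∫ ω, ∏ i : {i // p i}, trunc M (ξ (f i) ω) ∂μ
  set Y := ∫ ω, ∏ i : {i // ¬ p i}, ξ (f i) ω ∂μ
  set Y' := ∫ ω, ∏ i : {i // ¬ p i}, trunc M (ξ (f i) ω) ∂μ
  have hXM : |X| ≤ M ^ a * (1 + n * C) := by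
    have h1 : M ^ (a - δ) ≤ M ^ a := Real.rpow_le_rpow_of_exponent_le hM (by linarith)
    have h2 : a * C ≤ n * C := mul_le_mul_of_nonneg_right (by linarith) hC
    have h3 : M ^ (a - δ) * (a * C) ≤ M ^ a * (n * C) :=
      mul_le_mul h1 h2 (by positivity) (by positivity)
    linarith
  have t1 : |X - X'| * |Y'| ≤ M ^ (n - δ) * (2 * (n * C)) := by
    calc |X - X'| * |Y'| ≤ (2 * M ^ (a - δ) * (a * C)) * M ^ b :=
          mul_le_mul cX bY (abs_nonneg _) (by positivity)
      _ = M ^ (n - δ) * (2 * (a * C)) := by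
          rw [show n - δ = (a - δ) + b by linarith, Real.rpow_add hM0]; ring
      _ ≤ _ := by gcongr; linarith
  have t2 : |X| * |Y - Y'| ≤ M ^ (n - δ) * ((1 + n * C) * (2 * (n * C))) := by
    have hn0 : 0 ≤ n := by linarith
    calc |X| * |Y - Y'| ≤ (M ^ a * (1 + n * C)) * (2 * M ^ (b - δ) * (b * C)) :=
          mul_le_mul hXM cY (abs_nonneg _) (by positivity)
      _ = M ^ (n - δ) * ((1 + n * C) * (2 * (b * C))) := by
          rw [show n - δ = a + (b - δ) by linarith, Real.rpow_add hM0]; ring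
      _ ≤ _ := by gcongr; linarith
  have hE : E = X * Y + (E - E') + (E' - X' * Y') - ((X - X') * Y' + X * (Y - Y')) := by ring
  have : |E| ≤ |X| * |Y| + |E - E'| + |E' - X' * Y'| + (|X - X'| * |Y'| + |X| * |Y - Y'|) := by
    conv_lhs => rw [hE]
    rw [← abs_mul, ← abs_mul, ← abs_mul]
    refine (abs_sub _ _).trans (add_le_add ((abs_add_le _ _).trans
      (add_le_add_left (abs_add_le _ _) _)) (abs_add_le _ _))
  nlinarith
end proc

/-- The hypotheses on the process. -/
structure MixHyp {Ω : Type} [MeasurableSpace Ω] (μ : Measure Ω) (ξ : ℕ → Ω → ℝ)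
    (δ φ c C : ℝ) : Prop where
  meas : ∀ t, Measurable (ξ t)
  mean : ∀ t, ∫ ω, ξ t ω ∂μ = 0
  mom : ∀ t, ∫⁻ ω, ENNReal.ofReal (|ξ t ω| ^ δ) ∂μ ≤ ENNReal.ofReal C
  mix : ∀ h : ℕ, 0 < h → alphaMix μ ξ h ≤ c * (h : ℝ) ^ (-φ)

/-- explicit constant -/
noncomputable def covConst (n : ℕ) (φ c C : ℝ) : ℝ :=
  (1 + n * C) + (4 * (n * C) + (1 + n * C) * (2 * (n * C))) + 4 * c * 2 ^ φ

lemma covConst_nonneg (n : ℕ) (φ c C : ℝ) (hc : 0 ≤ c) (hC : 0 ≤ C) : 0 ≤ covConst n φ c C := by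
  unfold covConst; positivity

lemma pt_bd {Ω : Type} [MeasurableSpace Ω] (μ : Measure Ω) [IsProbabilityMeasure μ]
    (ξ : ℕ → Ω → ℝ) (δ φ c C : ℝ) (H : MixHyp μ ξ δ φ c C) (R : ℝ) (hδ0 : 0 < δ)
    (hR : R < δ) (hφ : 0 < φ) (hc : 0 ≤ c) (hC : 0 ≤ C) {ι : Type} [Fintype ι]
    (hn : (Fintype.card ι : ℝ) ≤ R) (f : ι → ℕ) (i j : ι) (hle : f i ≤ f j)
    (hgap : ∀ k, f k ≤ f i ∨ f j ≤ f k) (q : ι → Bool) (hq : ∀ k, q k = true ↔ f k ≤ f i) :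
    |∫ ω, ∏ k, ξ (f k) ω ∂μ| ≤
      (if f i < f j then |∫ ω, ∏ k : {k // q k = true}, ξ (f k) ω ∂μ| *
        |∫ ω, ∏ k : {k // ¬ q k = true}, ξ (f k) ω ∂μ| else 0) +
      covConst (Fintype.card ι) φ c C * (((f j - f i : ℕ) : ℝ) + 1) ^ (-(φ * (1 - R / δ))) := by
  split_ifs with hlt
  · set h := f j - f i with hh
    have hpos : 0 < h := by omega
    have hx : (1 : ℝ) ≤ (h : ℝ) + 1 := by linarith [(Nat.cast_nonneg h : (0 : ℝ) ≤ h)]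
    have hx0 : (0 : ℝ) < (h : ℝ) + 1 := by linarith
    have hM : 1 ≤ ((h : ℝ) + 1) ^ (φ / δ) := Real.one_le_rpow hx (by positivity)
    have key := cov_bd μ ξ δ C H.meas hC H.mom (by linarith) f (((h : ℝ) + 1) ^ (φ / δ)) hM
      (fun k => q k = true) (f i) h (fun k hk => (hq k).1 hk) (fun k hk => by
        rw [hq] at hk
        have := hgap k
        omega)
    refine key.trans ?_
    refine add_le_add_right ?_ _
    set n : ℝ := (Fintype.card ι : ℝ) with hndef
    have hn0 : 0 ≤ n := by positivity
    rw [← Real.rpow_mul hx0.le, ← Real.rpow_mul hx0.le]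
    set w := ((h : ℝ) + 1) ^ (-(φ * (1 - R / δ))) with hw
    have hw0 : 0 ≤ w := by positivity
    have e1 : ((h : ℝ) + 1) ^ (φ / δ * (n - δ)) ≤ w := by
      refine Real.rpow_le_rpow_of_exponent_le hx ?_
      have : -(φ * (1 - R / δ)) = φ / δ * (R - δ) := by field_simp; ring
      rw [this]
      exact mul_le_mul_of_nonneg_left (by linarith) (by positivity)
    have e2 : alphaMix μ ξ h ≤ c * (2 ^ φ * ((h : ℝ) + 1) ^ (-φ)) := by
      refine (H.mix h hpos).trans (mul_le_mul_of_nonneg_left ?_ hc)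
      have h1 : (1 : ℝ) ≤ h := by exact_mod_cast hpos
      calc (h : ℝ) ^ (-φ) ≤ (((h : ℝ) + 1) / 2) ^ (-φ) :=
            Real.rpow_le_rpow_of_nonpos (by positivity) (by linarith) (by linarith)
        _ = _ := by
            rw [Real.div_rpow hx0.le (by norm_num), Real.rpow_neg (by norm_num : (0:ℝ) ≤ 2)]
            field_simp
    have e3 : 4 * ((h : ℝ) + 1) ^ (φ / δ * n) * alphaMix μ ξ h ≤ 4 * c * 2 ^ φ * w := by
      calc _ ≤ 4 * ((h : ℝ) + 1) ^ (φ / δ * n) * (c * (2 ^ φ * ((h : ℝ) + 1) ^ (-φ))) :=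
            mul_le_mul_of_nonneg_left e2 (by positivity)
        _ = 4 * c * 2 ^ φ * ((h : ℝ) + 1) ^ (φ / δ * (n - δ)) := by
            rw [show φ / δ * (n - δ) = φ / δ * n + -φ by field_simp; ring, Real.rpow_add hx0]
            ring
        _ ≤ _ := mul_le_mul_of_nonneg_left e1 (by positivity)
    have e4 : (4 * (n * C) + (1 + n * C) * (2 * (n * C))) * ((h : ℝ) + 1) ^ (φ / δ * (n - δ)) ≤
        (4 * (n * C) + (1 + n * C) * (2 * (n * C))) * w :=
      mul_le_mul_of_nonneg_left e1 (by positivity)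
    have e5 : 0 ≤ (1 + n * C) * w := by positivity
    unfold covConst
    rw [← hndef]
    linarith
  · have h0 : f j - f i = 0 := by omega
    have := int_prod_bd μ ξ δ C H.meas hC H.mom (by linarith) f 1 le_rfl
    simp only [Real.one_rpow, one_mul] at this
    rw [h0]
    simp only [Nat.cast_zero, zero_add, Real.one_rpow, mul_one]
    refine this.trans ?_
    unfold covConst
    have : 0 ≤ (4 * ((Fintype.card ι : ℝ) * C) + (1 + (Fintype.card ι : ℝ) * C) *
      (2 * ((Fintype.card ι : ℝ) * C))) := by positivity
    have : 0 ≤ 4 * c * (2 : ℝ) ^ φ := by positivity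
    linarith

lemma split_sum {ι : Type} [Fintype ι] [DecidableEq ι] (T : ℕ) (q : ι → Bool)
    (F : ({k // q k = true} → Fin T) → ℝ) (G : ({k // ¬ q k = true} → Fin T) → ℝ) :
    ∑ f : ι → Fin T, F (fun k => f k) * G (fun k => f k) = (∑ g, F g) * ∑ g, G g := by
  rw [Finset.sum_mul_sum, ← Fintype.sum_prod_type' (f := fun a b => F a * G b)]
  exact Fintype.sum_equiv (Equiv.piEquivPiSubtypeProd (fun k => q k = true) (fun _ => Fin T)) _ _
    (fun f => rfl)

lemma main_ind (δ φ c C R : ℝ) (hδ0 : 0 < δ) (hR : R < δ) (hφ : 0 < φ) (hc : 0 ≤ c) (hC : 0 ≤ C)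
    (hθ : R / 2 < φ * (1 - R / δ)) (n : ℕ) : 1 ≤ n → (n : ℝ) ≤ R →
    ∃ K : ℝ, 0 ≤ K ∧ ∀ (Ω : Type) [MeasurableSpace Ω] (μ : Measure Ω) [IsProbabilityMeasure μ]
      (ξ : ℕ → Ω → ℝ), MixHyp μ ξ δ φ c C → ∀ (ι : Type) [Fintype ι] [DecidableEq ι],
      Fintype.card ι = n → ∀ T : ℕ, 0 < T →
      ∑ f : ι → Fin T, |∫ ω, ∏ k, ξ (f k) ω ∂μ| ≤ K * (T : ℝ) ^ ((n : ℝ) / 2) := by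
  induction n using Nat.strong_induction_on with
  | _ n ih =>
  intro hn1 hnR
  rcases hn1.eq_or_lt with hn | hn
  · subst hn
    refine ⟨0, le_rfl, ?_⟩
    intro Ω _ μ _ ξ H ι _ _ hι T hT
    obtain ⟨x, hx⟩ := Fintype.card_eq_one_iff.1 hι
    have e : ∀ (f : ι → Fin T) (ω : Ω), ∏ k, ξ (f k) ω = ξ (f x) ω := fun f ω =>
      Fintype.prod_eq_single x fun y hy => absurd (hx y) hy
    simp [e, H.mean]
  · -- a uniform constant for smaller sizes
    have hL : ∃ L : ℝ, 0 ≤ L ∧ ∀ m, 1 ≤ m → m < n →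
        ∀ (Ω : Type) [MeasurableSpace Ω] (μ : Measure Ω) [IsProbabilityMeasure μ]
        (ξ : ℕ → Ω → ℝ), MixHyp μ ξ δ φ c C → ∀ (ι : Type) [Fintype ι] [DecidableEq ι],
        Fintype.card ι = m → ∀ T : ℕ, 0 < T →
        ∑ f : ι → Fin T, |∫ ω, ∏ k, ξ (f k) ω ∂μ| ≤ L * (T : ℝ) ^ ((m : ℝ) / 2) := by
      have ih' : ∀ m, ∃ K : ℝ, 0 ≤ K ∧ (1 ≤ m → m < n →
          ∀ (Ω : Type) [MeasurableSpace Ω] (μ : Measure Ω) [IsProbabilityMeasure μ]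
          (ξ : ℕ → Ω → ℝ), MixHyp μ ξ δ φ c C → ∀ (ι : Type) [Fintype ι] [DecidableEq ι],
          Fintype.card ι = m → ∀ T : ℕ, 0 < T →
          ∑ f : ι → Fin T, |∫ ω, ∏ k, ξ (f k) ω ∂μ| ≤ K * (T : ℝ) ^ ((m : ℝ) / 2)) := by
        intro m
        by_cases hm : 1 ≤ m ∧ m < n
        · obtain ⟨K, hK, h⟩ := ih m hm.2 hm.1 (le_trans (by exact_mod_cast hm.2.le) hnR)
          exact ⟨K, hK, fun _ _ => h⟩
        · exact ⟨0, le_rfl, fun h1 h2 => absurd ⟨h1, h2⟩ hm⟩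
      choose Kf hKf0 hKf using ih'
      refine ⟨∑ m ∈ Finset.range n, Kf m, Finset.sum_nonneg fun m _ => hKf0 m, ?_⟩
      intro m h1 h2 Ω _ μ _ ξ H ι _ _ hι T hT
      refine (hKf m h1 h2 Ω μ ξ H ι hι T hT).trans ?_
      refine mul_le_mul_of_nonneg_right ?_ (by positivity)
      exact Finset.single_le_sum (f := Kf) (fun m _ => hKf0 m) (by simpa using h2)
    obtain ⟨L, hL0, hL⟩ := hL
    set θ := φ * (1 - R / δ) with hθdef
    obtain ⟨K, hK0, hK⟩ := count_sum n hn θ (by linarith)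
    have hcc := covConst_nonneg n φ c C hc hC
    refine ⟨2 ^ n * L ^ 2 + n * n * (covConst n φ c C * K), by positivity, ?_⟩
    intro Ω _ μ _ ξ H ι _ _ hι T hT
    have hT0 : (0 : ℝ) < T := by exact_mod_cast hT
    set E1 : (ι → Bool) → (ι → Fin T) → ℝ := fun q f =>
      |∫ ω, ∏ k : {k // q k = true}, ξ (f k) ω ∂μ| *
        |∫ ω, ∏ k : {k // ¬ q k = true}, ξ (f k) ω ∂μ| with hE1
    have hE1nn : ∀ q f, 0 ≤ E1 q f := fun q f => mul_nonneg (abs_nonneg _) (abs_nonneg _)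
    set W : ι → ι → (ι → Fin T) → ℝ := fun i j f => (if (f i : ℕ) ≤ f j ∧
          (∀ k, (f k : ℕ) ≤ f i + n * (f j - f i) ∧ (f i : ℕ) ≤ f k + n * (f j - f i))
          then ((((f j : ℕ) - f i : ℕ) : ℝ) + 1) ^ (-θ) else 0) with hW
    have hWnn : ∀ i j f, 0 ≤ W i j f := by
      intro i j f
      simp only [hW]
      split_ifs
      · positivity
      · exact le_rfl
    set Q : Finset (ι → Bool) := Finset.univ.filter
      (fun q => (∃ k, q k = true) ∧ ∃ k, ¬ q k = true) with hQ
    set P : Finset (ι × ι) := Finset.univ.filter (fun x => x.1 ≠ x.2) with hP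
    have hpt : ∀ f : ι → Fin T, |∫ ω, ∏ k, ξ (f k) ω ∂μ| ≤
        ∑ q ∈ Q, E1 q f + ∑ x ∈ P, covConst n φ c C * W x.1 x.2 f := by
      intro f
      obtain ⟨i, j, hij, hle, hgap, hspread⟩ := exists_gap n hn ι hι (fun k => (f k : ℕ))
      have h1 := pt_bd μ ξ δ φ c C H R hδ0 hR hφ hc hC (by rw [hι]; exact hnR)
        (fun k => (f k : ℕ)) i j hle hgap (fun k => decide ((f k : ℕ) ≤ f i)) (fun k => by simp)
      refine h1.trans (add_le_add ?_ ?_)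
      · split_ifs with hlt
        · refine Finset.single_le_sum (f := fun q => E1 q f) (fun q _ => hE1nn q f) ?_
          simp only [hQ, Finset.mem_filter, Finset.mem_univ, true_and]
          exact ⟨⟨i, by simp⟩, ⟨j, by simpa using hlt⟩⟩
        · exact Finset.sum_nonneg fun q _ => hE1nn q f
      · refine le_trans (le_of_eq ?_) (Finset.single_le_sum
          (f := fun x : ι × ι => covConst n φ c C * W x.1 x.2 f)
          (fun x _ => mul_nonneg hcc (hWnn _ _ _)) (a := (i, j)) ?_)
        · simp only [hW]
          rw [if_pos ⟨hle, hspread⟩, hι]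
        · simp [hP, hij]
    refine (Finset.sum_le_sum fun f _ => hpt f).trans ?_
    rw [Finset.sum_add_distrib, Finset.sum_comm, Finset.sum_comm (t := P), add_mul]
    refine add_le_add ?_ ?_
    · have hq : ∀ q ∈ Q, ∑ f, E1 q f ≤ L ^ 2 * (T : ℝ) ^ ((n : ℝ) / 2) := by
        intro q hq
        simp only [hQ, Finset.mem_filter, Finset.mem_univ, true_and] at hq
        obtain ⟨⟨a, ha⟩, ⟨b, hb⟩⟩ := hq
        have hsplit := split_sum T q
          (fun g => |∫ ω, ∏ k : {k // q k = true}, ξ (g k) ω ∂μ|)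
          (fun g => |∫ ω, ∏ k : {k // ¬ q k = true}, ξ (g k) ω ∂μ|)
        have hE : ∑ f, E1 q f = _ := hsplit
        rw [hE]
        have c1 : Fintype.card {k // ¬ q k = true} = n - Fintype.card {k // q k = true} := by
          rw [Fintype.card_subtype_compl, hι]
        have c2 : 0 < Fintype.card {k // q k = true} := Fintype.card_pos_iff.2 ⟨⟨a, ha⟩⟩
        have c3 : 0 < Fintype.card {k // ¬ q k = true} := Fintype.card_pos_iff.2 ⟨⟨b, hb⟩⟩
        have b1 := hL _ c2 (by omega) Ω μ ξ H {k // q k = true} rfl T hT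
        have b2 := hL _ c3 (by omega) Ω μ ξ H {k // ¬ q k = true} rfl T hT
        refine (mul_le_mul b1 b2 (Finset.sum_nonneg fun _ _ => abs_nonneg _)
          (by positivity)).trans (le_of_eq ?_)
        have hcast : (n : ℝ) = (Fintype.card {k // q k = true} : ℝ) +
            (Fintype.card {k // ¬ q k = true} : ℝ) := by
          rw [← Nat.cast_add]; congr 1; omega
        rw [hcast, add_div, Real.rpow_add hT0]
        ring
      refine (Finset.sum_le_card_nsmul _ _ _ hq).trans ?_
      rw [nsmul_eq_mul, ← mul_assoc]
      have : (Q.card : ℝ) ≤ 2 ^ n := by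
        have : Q.card ≤ Fintype.card (ι → Bool) := Finset.card_le_univ _
        rw [Fintype.card_fun, Fintype.card_bool, hι] at this
        exact_mod_cast this
      gcongr
    · have hx : ∀ x ∈ P, ∑ f, covConst n φ c C * W x.1 x.2 f ≤
          (covConst n φ c C * K) * (T : ℝ) ^ ((n : ℝ) / 2) := by
        intro x hx
        simp only [hP, Finset.mem_filter, Finset.mem_univ, true_and] at hx
        rw [← Finset.mul_sum, mul_assoc]
        exact mul_le_mul_of_nonneg_left (hK ι hι T hT x.1 x.2 hx) hcc
      refine (Finset.sum_le_card_nsmul _ _ _ hx).trans ?_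
      rw [nsmul_eq_mul, ← mul_assoc]
      have : (P.card : ℝ) ≤ n * n := by
        have : P.card ≤ Fintype.card (ι × ι) := Finset.card_le_univ _
        rw [Fintype.card_prod, hι] at this
        exact_mod_cast this
      gcongr

/-- Moment bounds for strong mixing processes: for `2r < δ`,
`r/(1 − 2r/δ) < φ`, there is a constant `B` (depending only on `r, δ, φ, c, C`)
such that for every mean-zero process `ξ` with `sup_t E|ξ_t|^δ ≤ C` and mixing
coefficients `α(h) ≤ c h^{−φ}`, one has
`E[(T^{−1/2} Σ_{t<T} ξ_t)^{2r}] ≤ B` for every `T`. -/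
theorem stmt_18 (r : ℕ) (hr : 0 < r) (δ φ c C : ℝ)
    (hδ : 2 * r < δ) (hφ : (r : ℝ) / (1 - 2 * r / δ) < φ) (hc : 0 ≤ c) (hC : 0 ≤ C) :
    ∃ B : ℝ, ∀ (Ω : Type) [MeasurableSpace Ω] (μ : Measure Ω)
      [IsProbabilityMeasure μ] (ξ : ℕ → Ω → ℝ),
      (∀ t, Measurable (ξ t)) →
      (∀ t, ∫ ω, ξ t ω ∂μ = 0) →
      (∀ t, ∫⁻ ω, ENNReal.ofReal (|ξ t ω| ^ δ) ∂μ ≤ ENNReal.ofReal C) →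
      (∀ h : ℕ, 0 < h → alphaMix μ ξ h ≤ c * (h : ℝ) ^ (-φ)) →
      ∀ T : ℕ, 0 < T →
        ∫⁻ ω, ENNReal.ofReal
            (((T : ℝ) ^ (-(1 / 2 : ℝ)) * ∑ t ∈ Finset.range T, ξ t ω) ^ (2 * r)) ∂μ ≤
          ENNReal.ofReal B := by
  have hr0 : (0 : ℝ) < r := by exact_mod_cast hr
  have hδ0 : 0 < δ := by linarith
  have hone : 0 < 1 - 2 * r / δ := by
    rw [sub_pos, div_lt_one hδ0]; exact hδ
  have hφ0 : 0 < φ := lt_trans (div_pos hr0 hone) hφ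
  have hθ : (2 * r : ℝ) / 2 < φ * (1 - 2 * r / δ) := by
    rw [div_lt_iff₀ hone] at hφ; linarith
  obtain ⟨K, hK0, hK⟩ := main_ind δ φ c C (2 * r) hδ0 hδ hφ0 hc hC hθ (2 * r) (by omega)
    (by push_cast; exact le_rfl)
  refine ⟨K, ?_⟩
  intro Ω _ μ _ ξ hm hmean hmom hmix T hT
  have H : MixHyp μ ξ δ φ c C := ⟨hm, hmean, hmom, hmix⟩
  have hT0 : (0 : ℝ) < T := by exact_mod_cast hT
  have hKT := hK Ω μ ξ H (Fin (2 * r)) (Fintype.card_fin _) T hT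
  have hexp : ∀ ω, ((T : ℝ) ^ (-(1 / 2 : ℝ)) * ∑ t ∈ Finset.range T, ξ t ω) ^ (2 * r) =
      (T : ℝ) ^ (-(r : ℝ)) * ∑ f : Fin (2 * r) → Fin T, ∏ k, ξ (f k) ω := by
    intro ω
    rw [mul_pow, ← Real.rpow_natCast, ← Real.rpow_mul hT0.le]
    congr 1
    · congr 1; push_cast; ring
    · rw [← Fin.sum_univ_eq_sum_range (fun t => ξ t ω) T]
      have := Finset.prod_univ_sum (fun _ : Fin (2 * r) => (Finset.univ : Finset (Fin T)))
        (fun _ t => ξ t ω)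
      rw [Fintype.piFinset_univ] at this
      simpa using this
  have hprodInt : ∀ f : Fin (2 * r) → Fin T, Integrable (fun ω => ∏ k, ξ (f k) ω) μ := fun f =>
    int_prod μ ξ δ C hm hC hmom (by rw [Fintype.card_fin]; push_cast; exact hδ.le)
      (fun k => (f k : ℕ))
  have hI : Integrable (fun ω => (T : ℝ) ^ (-(r : ℝ)) *
      ∑ f : Fin (2 * r) → Fin T, ∏ k, ξ (f k) ω) μ :=
    (integrable_finsetSum _ fun f _ => hprodInt f).const_mul _
  simp only [hexp]
  rw [← ofReal_integral_eq_lintegral_ofReal hI (Filter.Eventually.of_forall fun ω => by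
    simp only [Pi.zero_apply]
    rw [← hexp ω]
    exact (even_two_mul r).pow_nonneg _)]
  refine ENNReal.ofReal_le_ofReal ?_
  rw [integral_const_mul, integral_finsetSum _ fun f _ => hprodInt f]
  have h1 : ∑ f : Fin (2 * r) → Fin T, ∫ ω, ∏ k, ξ (f k) ω ∂μ ≤ K * (T : ℝ) ^ (r : ℝ) := by
    refine (Finset.sum_le_sum fun f _ => le_abs_self _).trans (hKT.trans (le_of_eq ?_))
    congr 2; push_cast; ring
  calc _ ≤ (T : ℝ) ^ (-(r : ℝ)) * (K * (T : ℝ) ^ (r : ℝ)) :=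
        mul_le_mul_of_nonneg_left h1 (by positivity)
    _ = K := by
        rw [Real.rpow_neg hT0.le]; field_simp
end

section
/- Let δ > 2, φ > 0, C₁ ≥ 0, C₂ ≥ 0 be real numbers with φ·(1 − 2/δ) > 1, and let N, T be positive integers. Let a₁, …, a_N : Ω → ℝ^T be random vectors on a probability space such that for each i the coordinate process (a_{i1}, …, a_{iT}) has E[a_{it}] = 0 and (E|a_{it}|^δ)^{1/δ} ≤ C₁ for every t, and its strong mixing coefficients satisfy α_i(q) ≤ C₂ · q^{−φ} for every positive integer q. Then the averaged second-moment matrix Σ := N^{−1} Σ_{i=1}^N E[a_i a_iᵀ] satisfies ‖Σ‖_2 ≤ C₁² · ( 1 + 16 · C₂^{1 − 2/δ} · Σ_{q=1}^∞ q^{−φ(1 − 2/δ)} ). -/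
open MeasureTheory

/-- The Euclidean (`ℓ²`) norm of a vector in `ℝ^n`. -/
noncomputable def vecL2Norm {n : ℕ} (x : Fin n → ℝ) : ℝ :=
  Real.sqrt (∑ i, x i ^ 2)

/-- The spectral norm of a real matrix: the operator norm induced by the
Euclidean vector norms. -/
noncomputable def matSpecNorm {m n : ℕ} (A : Matrix (Fin m) (Fin n) ℝ) : ℝ :=
  sSup {c : ℝ | ∃ x : Fin n → ℝ, vecL2Norm x ≤ 1 ∧ c = vecL2Norm (A.mulVec x)}

/-- The strong (α-)mixing coefficient of a finite real-valued process `ξ`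
(indexed by `Fin T`) at lag `q`. -/
noncomputable def alphaMixFin {Ω : Type*} [MeasurableSpace Ω] (μ : Measure Ω)
    {T : ℕ} (ξ : Fin T → Ω → ℝ) (q : ℕ) : ℝ :=
  sSup {x : ℝ | ∃ t : ℕ, ∃ A B : Set Ω,
    MeasurableSet[⨆ s : {s : Fin T // (s : ℕ) ≤ t},
      MeasurableSpace.comap (ξ s.1) inferInstance] A ∧
    MeasurableSet[⨆ s : {s : Fin T // t + q ≤ (s : ℕ)},
      MeasurableSpace.comap (ξ s.1) inferInstance] B ∧
    x = |(μ (A ∩ B)).toReal - (μ A).toReal * (μ B).toReal|}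


/-- truncation at level `M` -/
noncomputable def trunc19 (M x : ℝ) : ℝ := if |x| ≤ M then x else 0

lemma trunc19_meas (M : ℝ) : Measurable (trunc19 M) := by
  unfold trunc19
  exact Measurable.ite (measurableSet_le measurable_id.abs measurable_const) measurable_id
    measurable_const

lemma trunc19_abs {M : ℝ} (hM : 0 ≤ M) (x : ℝ) : |trunc19 M x| ≤ M := by
  unfold trunc19; split_ifs with h
  · exact h
  · simpa using hM

lemma trunc19_sq {M δ : ℝ} (hM : 0 < M) (hδ : 2 < δ) (x : ℝ) :
    (x - trunc19 M x) ^ 2 ≤ M ^ (2 - δ) * |x| ^ δ := by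
  unfold trunc19; split_ifs with h
  · simp; positivity
  · push Not at h
    have hx : 0 < |x| := hM.trans h
    have h1 : |x| ^ (2 - δ) ≤ M ^ (2 - δ) :=
      Real.rpow_le_rpow_of_nonpos hM h.le (by linarith)
    have h2 : (x - 0) ^ 2 = |x| ^ (2 - δ) * |x| ^ δ := by
      rw [← Real.rpow_add hx]
      simp
    rw [h2]
    gcongr

lemma trunc19_mul {M δ : ℝ} (hM : 0 < M) (hδ : 2 < δ) (x : ℝ) :
    M * |x - trunc19 M x| ≤ M ^ (2 - δ) * |x| ^ δ := by
  refine le_trans ?_ (trunc19_sq hM hδ x)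
  unfold trunc19; split_ifs with h
  · simp
  · push Not at h
    rw [sub_zero, ← sq_abs]
    nlinarith [abs_nonneg x]

lemma trunc19_prod {M δ : ℝ} (hM : 0 < M) (hδ : 2 < δ) (x y : ℝ) :
    |x * y - trunc19 M x * trunc19 M y| ≤ (3 / 2) * M ^ (2 - δ) * (|x| ^ δ + |y| ^ δ) := by
  have hx := trunc19_sq hM hδ x
  have hy := trunc19_sq hM hδ y
  have hx1 := trunc19_mul hM hδ x
  have hy1 := trunc19_mul hM hδ y
  have hx2 := trunc19_abs hM.le x
  have hy2 := trunc19_abs hM.le y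
  set u := trunc19 M x
  set v := trunc19 M y
  have e : x * y - u * v = u * (y - v) + (x - u) * v + (x - u) * (y - v) := by ring
  have h1 : |u * (y - v)| ≤ M * |y - v| := by rw [abs_mul]; gcongr
  have h2 : |(x - u) * v| ≤ M * |x - u| := by rw [abs_mul, mul_comm]; gcongr
  have h3 : |(x - u) * (y - v)| ≤ ((x - u) ^ 2 + (y - v) ^ 2) / 2 := by
    rw [abs_le]; constructor <;> nlinarith [sq_nonneg (x - u + (y - v)), sq_nonneg (x - u - (y - v))]
  rw [e]
  have := abs_add_three (u * (y - v)) ((x - u) * v) ((x - u) * (y - v))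
  linarith

/-- bounded function against a centred one -/
lemma bdd19 {Ω : Type} {m m0 : MeasurableSpace Ω} (μ : Measure[m0] Ω) [IsProbabilityMeasure μ]
    (hm : m ≤ m0) (X Z : Ω → ℝ) (M K : ℝ) (hM : 0 ≤ M) (hX : Measurable[m] X)
    (hXM : ∀ ω, |X ω| ≤ M) (hZ : Integrable Z μ) (hZ0 : ∫ ω, Z ω ∂μ = 0)
    (hK : ∀ A, MeasurableSet[m] A → |∫ ω in A, Z ω ∂μ| ≤ K) :
    |∫ ω, X ω * Z ω ∂μ| ≤ 2 * M * K := by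
  have hXs : StronglyMeasurable[m] X := hX.stronglyMeasurable
  have hXZ : Integrable (fun ω => X ω * Z ω) μ :=
    hZ.bdd_mul (c := M) (hXs.mono hm).aestronglyMeasurable (Filter.Eventually.of_forall hXM)
  have h1 : μ[fun ω => X ω * Z ω|m] =ᵐ[μ] fun ω => X ω * (μ[Z|m]) ω :=
    condExp_mul_of_stronglyMeasurable_left hXs hXZ hZ
  have h2 : ∫ ω, X ω * Z ω ∂μ = ∫ ω, X ω * (μ[Z|m]) ω ∂μ := by
    rw [← integral_condExp hm]
    exact integral_congr_ae h1
  set W := μ[Z|m] with hW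
  have hWi : Integrable W μ := integrable_condExp
  have hWm : StronglyMeasurable[m] W := stronglyMeasurable_condExp
  have hA : MeasurableSet[m] {ω | 0 ≤ W ω} := measurableSet_le measurable_const hWm.measurable
  set A := {ω | 0 ≤ W ω}
  have h3 : |∫ ω, X ω * W ω ∂μ| ≤ M * ∫ ω, |W ω| ∂μ := by
    refine (abs_integral_le_integral_abs).trans ?_
    rw [← integral_const_mul]
    refine integral_mono_of_nonneg (Filter.Eventually.of_forall fun ω => abs_nonneg _)
      (hWi.abs.const_mul M) (Filter.Eventually.of_forall fun ω => ?_)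
    simp only [abs_mul]
    gcongr
    exact hXM ω
  have h4 : ∫ ω, |W ω| ∂μ = ∫ ω in A, Z ω ∂μ - ∫ ω in Aᶜ, Z ω ∂μ := by
    rw [← setIntegral_condExp hm hZ hA, ← setIntegral_condExp hm hZ hA.compl,
      ← integral_add_compl (hm _ hA) hWi.abs, sub_eq_add_neg, ← integral_neg]
    congr 1
    · exact setIntegral_congr_fun (hm _ hA) fun ω hω => abs_of_nonneg hω
    · exact setIntegral_congr_fun (hm _ hA.compl) fun ω hω => abs_of_neg (not_le.mp hω)
  have h5 := hK A hA
  have h6 := hK Aᶜ hA.compl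
  rw [h2]
  refine h3.trans ?_
  rw [h4]
  have : ∫ ω in A, Z ω ∂μ - ∫ ω in Aᶜ, Z ω ∂μ ≤ 2 * K := by
    linarith [le_abs_self (∫ ω in A, Z ω ∂μ), neg_abs_le (∫ ω in Aᶜ, Z ω ∂μ)]
  nlinarith

lemma cov19 {Ω : Type} {m1 m2 m0 : MeasurableSpace Ω} (μ : Measure[m0] Ω) [IsProbabilityMeasure μ]
    (hm1 : m1 ≤ m0) (hm2 : m2 ≤ m0) (X Y : Ω → ℝ) (M α : ℝ) (hM : 0 ≤ M)
    (hX : Measurable[m1] X) (hY : Measurable[m2] Y)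
    (hXM : ∀ ω, |X ω| ≤ M) (hYM : ∀ ω, |Y ω| ≤ M)
    (hα : ∀ A B, MeasurableSet[m1] A → MeasurableSet[m2] B →
      |(μ (A ∩ B)).toReal - (μ A).toReal * (μ B).toReal| ≤ α) :
    |∫ ω, X ω * Y ω ∂μ - (∫ ω, X ω ∂μ) * ∫ ω, Y ω ∂μ| ≤ 4 * α * M ^ 2 := by
  have hXi : Integrable X μ := Integrable.of_bound
    (hX.mono hm1 le_rfl).aestronglyMeasurable M (Filter.Eventually.of_forall hXM)
  have hYi : Integrable Y μ := Integrable.of_bound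
    (hY.mono hm2 le_rfl).aestronglyMeasurable M (Filter.Eventually.of_forall hYM)
  have hXY : Integrable (fun ω => X ω * Y ω) μ :=
    hYi.bdd_mul (c := M) (hX.mono hm1 le_rfl).aestronglyMeasurable (Filter.Eventually.of_forall hXM)
  set y := ∫ ω, Y ω ∂μ with hy
  have hstep : ∀ A, MeasurableSet[m1] A → |∫ ω in A, (Y ω - y) ∂μ| ≤ 2 * M * α := by
    intro A hA
    have hAi : Integrable (A.indicator (fun _ => (1:ℝ))) μ :=
      (integrable_const 1).indicator (hm1 _ hA)
    have key := bdd19 μ hm2 Y (fun ω => A.indicator (fun _ => (1:ℝ)) ω - (μ A).toReal) M α hM hY hYM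
      (hAi.sub (integrable_const _)) ?_ ?_
    · convert key using 2
      have e1 : ∫ ω in A, (Y ω - y) ∂μ = ∫ ω in A, Y ω ∂μ - (μ A).toReal * y := by
        rw [integral_sub hYi.integrableOn (integrable_const _)]
        simp [Measure.real]
      have e2 : ∀ ω, Y ω * (A.indicator (fun _ => (1:ℝ)) ω - (μ A).toReal)
          = A.indicator Y ω - (μ A).toReal * Y ω := by
        intro ω
        by_cases h : ω ∈ A <;> simp [h] <;> ring
      simp_rw [e2]
      rw [e1, integral_sub (hYi.indicator (hm1 _ hA)) (hYi.const_mul _),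
        integral_indicator (hm1 _ hA), integral_const_mul]
    · rw [integral_sub hAi (integrable_const _), integral_indicator (hm1 _ hA)]
      simp [Measure.real]
    · intro B hB
      rw [integral_sub hAi.integrableOn (integrable_const _), integral_indicator (hm1 _ hA),
        Measure.restrict_restrict (hm1 _ hA)]
      have := hα A B hA hB
      simpa [Measure.real, mul_comm] using this
  have key := bdd19 μ hm1 X (fun ω => Y ω - y) M (2 * M * α) hM hX hXM
    (hYi.sub (integrable_const _)) (by rw [integral_sub hYi (integrable_const _)]; simp [hy]) hstep
  have e : ∫ ω, X ω * (Y ω - y) ∂μ = ∫ ω, X ω * Y ω ∂μ - (∫ ω, X ω ∂μ) * y := by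
    simp_rw [mul_sub]
    rw [integral_sub hXY (hXi.mul_const _), integral_mul_const]
  rw [e] at key
  linarith

lemma young19 {C δ : ℝ} (hC : 0 < C) (hδ : 2 < δ) (x : ℝ) :
    x ^ 2 ≤ C ^ 2 * (2 / δ * (|x| ^ δ / C ^ δ) + (1 - 2 / δ)) := by
  have hd : 2 / δ ≤ 1 := by rw [div_le_one (by linarith)]; exact hδ.le
  have := Real.geom_mean_le_arith_mean2_weighted (w₁ := 2 / δ) (w₂ := 1 - 2 / δ)
    (p₁ := |x| ^ δ / C ^ δ) (p₂ := 1) (by positivity) (by linarith) (by positivity) zero_le_one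
    (by ring)
  rw [← Real.div_rpow (abs_nonneg _) hC.le, ← Real.rpow_mul (by positivity),
    mul_div_cancel₀ _ (by linarith)] at this
  simp only [Real.one_rpow, mul_one, Real.rpow_two, div_pow, sq_abs] at this
  rw [div_le_iff₀ (by positivity), Real.div_rpow (abs_nonneg _) hC.le] at this
  linarith

lemma second19 {Ω : Type} [MeasurableSpace Ω] (μ : Measure Ω) [IsProbabilityMeasure μ]
    (X : Ω → ℝ) {C δ : ℝ} (hC : 0 < C) (hδ : 2 < δ)
    (hXi : Integrable (fun ω => |X ω| ^ δ) μ) (hXC : ∫ ω, |X ω| ^ δ ∂μ ≤ C ^ δ) :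
    ∫ ω, X ω * X ω ∂μ ≤ C ^ 2 := by
  have h : ∫ ω, X ω * X ω ∂μ ≤ ∫ ω, C ^ 2 * (2 / δ * (|X ω| ^ δ / C ^ δ) + (1 - 2 / δ)) ∂μ := by
    refine integral_mono_of_nonneg (Filter.Eventually.of_forall fun ω => mul_self_nonneg _)
      ((((hXi.div_const _).const_mul _).add (integrable_const _)).const_mul _)
      (Filter.Eventually.of_forall fun ω => ?_)
    simpa [pow_two] using young19 hC hδ (X ω)
  refine h.trans ?_
  rw [integral_const_mul, integral_add ((hXi.div_const _).const_mul _) (integrable_const _),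
    integral_const_mul, integral_div]
  simp only [integral_const, probReal_univ, smul_eq_mul, one_mul]
  have h1 : (∫ ω, |X ω| ^ δ ∂μ) / C ^ δ ≤ 1 := by
    rw [div_le_one (by positivity)]; exact hXC
  have h2 : 0 < 2 / δ := by positivity
  have : 2 / δ * ((∫ ω, |X ω| ^ δ ∂μ) / C ^ δ) ≤ 2 / δ * 1 := by gcongr
  have : 0 < C ^ 2 := by positivity
  nlinarith

lemma integ19 {Ω : Type} [MeasurableSpace Ω] (μ : Measure Ω) [IsProbabilityMeasure μ]
    (X : Ω → ℝ) {δ : ℝ} (hδ : 2 < δ) (hXm : Measurable X)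
    (hXi : Integrable (fun ω => |X ω| ^ δ) μ) : MemLp X 2 μ := by
  rw [memLp_two_iff_integrable_sq hXm.aestronglyMeasurable]
  refine Integrable.mono' (((hXi.div_const ((1:ℝ) ^ δ)).const_mul (2 / δ)).add
    (integrable_const (1 - 2 / δ))) (hXm.pow_const 2).aestronglyMeasurable
    (Filter.Eventually.of_forall fun ω => ?_)
  have := young19 one_pos hδ (X ω)
  simpa using this

lemma dav19_M {Ω : Type} {m1 m2 m0 : MeasurableSpace Ω} (μ : Measure[m0] Ω)
    [IsProbabilityMeasure μ]
    (hm1 : m1 ≤ m0) (hm2 : m2 ≤ m0) (X Y : Ω → ℝ) (M α D δ : ℝ) (hM : 0 < M) (hδ : 2 < δ)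
    (hX : Measurable[m1] X) (hY : Measurable[m2] Y)
    (hX0 : ∫ ω, X ω ∂μ = 0)
    (hXi : Integrable (fun ω => |X ω| ^ δ) μ) (hXC : ∫ ω, |X ω| ^ δ ∂μ ≤ D)
    (hYi : Integrable (fun ω => |Y ω| ^ δ) μ) (hYC : ∫ ω, |Y ω| ^ δ ∂μ ≤ D)
    (hα : ∀ A B, MeasurableSet[m1] A → MeasurableSet[m2] B →
      |(μ (A ∩ B)).toReal - (μ A).toReal * (μ B).toReal| ≤ α) :
    |∫ ω, X ω * Y ω ∂μ| ≤ 4 * α * M ^ 2 + 4 * (M ^ (2 - δ) * D) := by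
  have hX' : Measurable[m0] X := hX.mono hm1 le_rfl
  have hY' : Measurable[m0] Y := hY.mono hm2 le_rfl
  have hX2 := integ19 μ X hδ hX' hXi
  have hY2 := integ19 μ Y hδ hY' hYi
  have hXY : Integrable (fun ω => X ω * Y ω) μ := hX2.integrable_mul hY2
  have hXint : Integrable X μ := hX2.integrable (by norm_num)
  have hU := (trunc19_meas M).comp hX
  have hV := (trunc19_meas M).comp hY
  have hcov := cov19 μ hm1 hm2 _ _ M α hM.le hU hV (fun ω => trunc19_abs hM.le _)
    (fun ω => trunc19_abs hM.le _) hα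
  simp only [Function.comp_def] at hcov
  have hUi : Integrable (fun ω => trunc19 M (X ω)) μ := Integrable.of_bound
    (hU.mono hm1 le_rfl).aestronglyMeasurable M
    (Filter.Eventually.of_forall fun ω => trunc19_abs hM.le _)
  have hVi : Integrable (fun ω => trunc19 M (Y ω)) μ := Integrable.of_bound
    (hV.mono hm2 le_rfl).aestronglyMeasurable M
    (Filter.Eventually.of_forall fun ω => trunc19_abs hM.le _)
  have hUV : Integrable (fun ω => trunc19 M (X ω) * trunc19 M (Y ω)) μ :=
    hVi.bdd_mul (c := M) hUi.aestronglyMeasurable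
      (Filter.Eventually.of_forall fun ω => trunc19_abs hM.le _)
  have hP : 0 < M ^ (2 - δ) := by positivity
  have h1 : |∫ ω, X ω * Y ω ∂μ - ∫ ω, trunc19 M (X ω) * trunc19 M (Y ω) ∂μ| ≤
      3 * (M ^ (2 - δ) * D) := by
    rw [← integral_sub hXY hUV]
    refine abs_integral_le_integral_abs.trans ?_
    refine (integral_mono_of_nonneg (Filter.Eventually.of_forall fun ω => abs_nonneg _)
      ((hXi.add hYi).const_mul ((3 / 2) * M ^ (2 - δ)))
      (Filter.Eventually.of_forall fun ω => trunc19_prod hM hδ (X ω) (Y ω))).trans ?_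
    simp only [Pi.add_apply]
    rw [integral_const_mul, integral_add hXi hYi]
    nlinarith
  have h2 : M * |∫ ω, trunc19 M (X ω) ∂μ| ≤ M ^ (2 - δ) * D := by
    have e : ∫ ω, (X ω - trunc19 M (X ω)) ∂μ = - ∫ ω, trunc19 M (X ω) ∂μ := by
      rw [integral_sub hXint hUi, hX0, zero_sub]
    rw [← abs_neg, ← e]
    refine (mul_le_mul_of_nonneg_left abs_integral_le_integral_abs hM.le).trans ?_
    rw [← integral_const_mul]
    refine (integral_mono_of_nonneg (Filter.Eventually.of_forall fun ω => by positivity)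
      (hXi.const_mul (M ^ (2 - δ)))
      (Filter.Eventually.of_forall fun ω => trunc19_mul hM hδ (X ω))).trans ?_
    rw [integral_const_mul]
    gcongr
  have h3 : |∫ ω, trunc19 M (Y ω) ∂μ| ≤ M := by
    have := norm_integral_le_of_norm_le_const (μ := μ) (f := fun ω => trunc19 M (Y ω)) (C := M)
      (Filter.Eventually.of_forall fun ω => trunc19_abs hM.le _)
    simpa using this
  have h4 : |(∫ ω, trunc19 M (X ω) ∂μ) * ∫ ω, trunc19 M (Y ω) ∂μ| ≤ M ^ (2 - δ) * D := by
    rw [abs_mul]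
    refine le_trans ?_ h2
    rw [mul_comm]
    gcongr
  rw [abs_le] at *
  constructor <;> linarith [h1.1, h1.2, h4.1, h4.2, hcov.1, hcov.2]

lemma dav19 {Ω : Type} {m1 m2 m0 : MeasurableSpace Ω} (μ : Measure[m0] Ω)
    [IsProbabilityMeasure μ]
    (hm1 : m1 ≤ m0) (hm2 : m2 ≤ m0) (X Y : Ω → ℝ) (α C δ : ℝ) (hC : 0 ≤ C) (hα0 : 0 ≤ α)
    (hδ : 2 < δ)
    (hX : Measurable[m1] X) (hY : Measurable[m2] Y)
    (hX0 : ∫ ω, X ω ∂μ = 0)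
    (hXi : Integrable (fun ω => |X ω| ^ δ) μ) (hXC : ∫ ω, |X ω| ^ δ ∂μ ≤ C ^ δ)
    (hYi : Integrable (fun ω => |Y ω| ^ δ) μ) (hYC : ∫ ω, |Y ω| ^ δ ∂μ ≤ C ^ δ)
    (hα : ∀ A B, MeasurableSet[m1] A → MeasurableSet[m2] B →
      |(μ (A ∩ B)).toReal - (μ A).toReal * (μ B).toReal| ≤ α) :
    |∫ ω, X ω * Y ω ∂μ| ≤ 8 * C ^ 2 * α ^ (1 - 2 / δ) := by
  have hth : 0 < 1 - 2 / δ := by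
    rw [sub_pos, div_lt_one (by linarith)]; exact hδ
  have hε : ∀ ε : ℝ, 0 < ε →
      |∫ ω, X ω * Y ω ∂μ| ≤ 8 * (C + ε) ^ 2 * (α + ε) ^ (1 - 2 / δ) := by
    intro ε hε
    have hc : 0 < C + ε := by linarith
    have ha : 0 < α + ε := by linarith
    have hCC : C ^ δ ≤ (C + ε) ^ δ := Real.rpow_le_rpow hC (by linarith) (by linarith)
    have key := dav19_M μ hm1 hm2 X Y ((C + ε) * (α + ε) ^ (-(1 / δ))) (α + ε) ((C + ε) ^ δ) δ
      (by positivity) hδ hX hY hX0 hXi (hXC.trans hCC) hYi (hYC.trans hCC)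
      (fun A B hA hB => (hα A B hA hB).trans (by linarith))
    refine key.trans (le_of_eq ?_)
    generalize C + ε = c at *
    generalize α + ε = b at *
    have hδ0 : δ ≠ 0 := by linarith
    have e1 : b * (c * b ^ (-(1 / δ))) ^ 2 = c ^ 2 * b ^ (1 - 2 / δ) := by
      have : b ^ (1 - 2 / δ) = b * (b ^ (-(1 / δ))) ^ 2 := by
        rw [← Real.rpow_natCast, ← Real.rpow_mul ha.le]
        nth_rewrite 2 [← Real.rpow_one b]
        rw [← Real.rpow_add ha]
        congr 1; push_cast; ring
      rw [this]; ring
    have e2 : (c * b ^ (-(1 / δ))) ^ (2 - δ) * c ^ δ = c ^ 2 * b ^ (1 - 2 / δ) := by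
      rw [Real.mul_rpow hc.le (by positivity), ← Real.rpow_mul ha.le]
      have : c ^ 2 = c ^ (2 - δ) * c ^ δ := by
        rw [← Real.rpow_add hc]; simp
      rw [this]
      have : -(1 / δ) * (2 - δ) = 1 - 2 / δ := by field_simp; ring
      rw [this]; ring
    rw [e2, mul_assoc 4 b, e1]; ring
  have hcont : Filter.Tendsto (fun ε : ℝ => 8 * (C + ε) ^ 2 * (α + ε) ^ (1 - 2 / δ))
      (nhdsWithin 0 (Set.Ioi 0)) (nhds (8 * (C + 0) ^ 2 * (α + 0) ^ (1 - 2 / δ))) := by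
    have : Continuous (fun ε : ℝ => 8 * (C + ε) ^ 2 * (α + ε) ^ (1 - 2 / δ)) := by
      refine Continuous.mul (by fun_prop) ?_
      exact (by fun_prop : Continuous fun ε : ℝ => α + ε).rpow_const (fun _ => Or.inr hth.le)
    exact (this.tendsto 0).mono_left nhdsWithin_le_nhds
  have := ge_of_tendsto hcont (Filter.eventually_of_mem self_mem_nhdsWithin fun ε h => hε ε h)
  simpa using this

lemma second19' {Ω : Type} [MeasurableSpace Ω] (μ : Measure Ω) [IsProbabilityMeasure μ]
    (X : Ω → ℝ) {C δ : ℝ} (hC : 0 ≤ C) (hδ : 2 < δ)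
    (hXi : Integrable (fun ω => |X ω| ^ δ) μ) (hXC : ∫ ω, |X ω| ^ δ ∂μ ≤ C ^ δ) :
    ∫ ω, X ω * X ω ∂μ ≤ C ^ 2 := by
  have hcont : Filter.Tendsto (fun ε : ℝ => (C + ε) ^ 2)
      (nhdsWithin 0 (Set.Ioi 0)) (nhds ((C + 0) ^ 2)) := by
    have : Continuous (fun ε : ℝ => (C + ε) ^ 2) := by fun_prop
    exact (this.tendsto 0).mono_left nhdsWithin_le_nhds
  have := ge_of_tendsto hcont (Filter.eventually_of_mem self_mem_nhdsWithin fun ε h => by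
    have h' : 0 < ε := h
    exact second19 μ X (C := C + ε) (by linarith) hδ hXi
      (hXC.trans (Real.rpow_le_rpow hC (by linarith) (by linarith))))
  simpa using this

lemma schur19 {n : ℕ} (A : Matrix (Fin n) (Fin n) ℝ) (R : ℝ) (hR : 0 ≤ R)
    (hsymm : ∀ s t, A s t = A t s) (hrow : ∀ s, ∑ t, |A s t| ≤ R) :
    matSpecNorm A ≤ R := by
  unfold matSpecNorm
  refine Real.sSup_le ?_ hR
  rintro c ⟨x, hx, rfl⟩
  unfold vecL2Norm at *
  have hx2 : ∑ i, x i ^ 2 ≤ 1 := by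
    have := (Real.sqrt_le_iff.mp hx).2
    simpa using this
  refine Real.sqrt_le_iff.mpr ⟨hR, ?_⟩
  have h1 : ∀ s, (A.mulVec x s) ^ 2 ≤ R * ∑ t, |A s t| * x t ^ 2 := by
    intro s
    have hcs := Finset.sum_sq_le_sum_mul_sum_of_sq_le_mul (s := (Finset.univ : Finset (Fin n)))
      (r := fun t => A s t * x t) (f := fun t => |A s t|) (g := fun t => |A s t| * x t ^ 2)
      (fun t _ => abs_nonneg _) (fun t _ => by positivity)
      (fun t _ => by rw [mul_pow, ← sq_abs (A s t)]; apply le_of_eq; ring)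
    refine hcs.trans ?_
    gcongr
    · exact hrow s
  calc ∑ s, (A.mulVec x s) ^ 2 ≤ ∑ s, R * ∑ t, |A s t| * x t ^ 2 :=
        Finset.sum_le_sum fun s _ => h1 s
    _ = R * ∑ t, (∑ s, |A t s|) * x t ^ 2 := by
        rw [← Finset.mul_sum, Finset.sum_comm]
        simp_rw [Finset.sum_mul, hsymm]
    _ ≤ R * ∑ t, R * x t ^ 2 := by
        gcongr with t
        exact hrow t
    _ = R ^ 2 * ∑ t, x t ^ 2 := by rw [← Finset.mul_sum]; ring
    _ ≤ R ^ 2 * 1 := by gcongr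
    _ = R ^ 2 := mul_one _

lemma rowsum19 {T : ℕ} (f : ℕ → ℝ) (hf0 : ∀ q, 0 ≤ f q) (hf : Summable f)
    (s : Fin T) (g : Fin T → ℝ) (d K : ℝ) (hK : 0 ≤ K) (hd : g s ≤ d)
    (h1 : ∀ t : Fin T, s < t → g t ≤ K * f (t.1 - s.1 - 1))
    (h2 : ∀ t : Fin T, t < s → g t ≤ K * f (s.1 - t.1 - 1)) :
    ∑ t, g t ≤ d + 2 * K * ∑' q, f q := by
  have hsum : ∀ (S : Finset (Fin T)) (e : Fin T → ℕ), Set.InjOn e S →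
      ∑ t ∈ S, f (e t) ≤ ∑' q, f q := by
    intro S e he
    rw [← Finset.sum_image (f := f) he]
    exact hf.sum_le_tsum _ fun q _ => hf0 q
  have a1 : ∑ t ∈ Finset.univ.filter (fun t => s < t), g t ≤ K * ∑' q, f q := by
    refine (Finset.sum_le_sum (g := fun t : Fin T => K * f (t.1 - s.1 - 1))
      fun t ht => h1 t (by simpa using ht)).trans ?_
    rw [← Finset.mul_sum]
    refine mul_le_mul_of_nonneg_left (hsum _ (fun t => t.1 - s.1 - 1) ?_) hK
    intro t ht u hu h
    simp at ht hu h
    ext; omega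
  have a2 : ∑ t ∈ Finset.univ.filter (fun t => t < s), g t ≤ K * ∑' q, f q := by
    refine (Finset.sum_le_sum (g := fun t : Fin T => K * f (s.1 - t.1 - 1))
      fun t ht => h2 t (by simpa using ht)).trans ?_
    rw [← Finset.mul_sum]
    refine mul_le_mul_of_nonneg_left (hsum _ (fun t => s.1 - t.1 - 1) ?_) hK
    intro t ht u hu h
    simp at ht hu h
    ext; omega
  have e : ∑ t, g t = g s + (∑ t ∈ Finset.univ.filter (fun t => s < t), g t
      + ∑ t ∈ Finset.univ.filter (fun t => t < s), g t) := by
    rw [← Finset.add_sum_erase _ _ (Finset.mem_univ s), ← Finset.sum_union]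
    · congr 1
      refine Finset.sum_congr ?_ fun _ _ => rfl
      ext t
      simp only [Finset.mem_erase, Finset.mem_univ, Finset.mem_union, Finset.mem_filter, true_and,
        and_true]
      rw [ne_comm, ne_iff_lt_or_gt]
    · rw [Finset.disjoint_filter]
      intro t _ h h'
      exact lt_asymm h h'
  rw [e]; linarith

lemma alpha19 {Ω : Type} [MeasurableSpace Ω] (μ : Measure Ω) [IsProbabilityMeasure μ]
    {T : ℕ} (ξ : Fin T → Ω → ℝ) (q t : ℕ) (A B : Set Ω)
    (hA : MeasurableSet[⨆ s : {s : Fin T // (s : ℕ) ≤ t},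
      MeasurableSpace.comap (ξ s.1) inferInstance] A)
    (hB : MeasurableSet[⨆ s : {s : Fin T // t + q ≤ (s : ℕ)},
      MeasurableSpace.comap (ξ s.1) inferInstance] B) :
    |(μ (A ∩ B)).toReal - (μ A).toReal * (μ B).toReal| ≤ alphaMixFin μ ξ q := by
  unfold alphaMixFin
  refine le_csSup ⟨1, ?_⟩ ⟨t, A, B, hA, hB, rfl⟩
  rintro x ⟨t, A, B, -, -, rfl⟩
  have h : ∀ S : Set Ω, 0 ≤ (μ S).toReal ∧ (μ S).toReal ≤ 1 := fun S =>
    ⟨ENNReal.toReal_nonneg, measureReal_le_one⟩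
  have h1 := h (A ∩ B)
  have h2 := h A
  have h3 := h B
  rw [abs_le]
  constructor <;> nlinarith

lemma mom19 {Ω : Type} [MeasurableSpace Ω] (μ : Measure Ω) 
    (X : Ω → ℝ) {C δ : ℝ} (hC : 0 ≤ C) (hX : Measurable X)
    (h : ∫⁻ ω, ENNReal.ofReal (|X ω| ^ δ) ∂μ ≤ ENNReal.ofReal (C ^ δ)) :
    Integrable (fun ω => |X ω| ^ δ) μ ∧ ∫ ω, |X ω| ^ δ ∂μ ≤ C ^ δ := by
  have hm : AEStronglyMeasurable (fun ω => |X ω| ^ δ) μ :=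
    (hX.abs.pow_const δ).aestronglyMeasurable
  have h0 : 0 ≤ᵐ[μ] (fun ω => |X ω| ^ δ) := Filter.Eventually.of_forall fun ω => by
    simp only [Pi.zero_apply]; positivity
  constructor
  · refine ⟨hm, ?_⟩
    rw [hasFiniteIntegral_iff_ofReal h0]
    exact h.trans_lt ENNReal.ofReal_lt_top
  · rw [integral_eq_lintegral_of_nonneg_ae h0 hm]
    exact ENNReal.toReal_le_of_le_ofReal (by positivity) h

lemma entry19 (δ φ C₁ C₂ : ℝ) (hδ : 2 < δ)
    (hC₁ : 0 ≤ C₁) (hC₂ : 0 ≤ C₂)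
    {Ω : Type} [MeasurableSpace Ω] (μ : Measure Ω) [IsProbabilityMeasure μ]
    (T : ℕ) (ξ : Fin T → Ω → ℝ)
    (hmeas : ∀ t, Measurable (ξ t))
    (hmean : ∀ t, ∫ ω, ξ t ω ∂μ = 0)
    (hmom : ∀ t, ∫⁻ ω, ENNReal.ofReal (|ξ t ω| ^ δ) ∂μ ≤ ENNReal.ofReal (C₁ ^ δ))
    (hmix : ∀ q : ℕ, 0 < q → alphaMixFin μ ξ q ≤ C₂ * (q : ℝ) ^ (-φ))
    (s t : Fin T) (hst : s < t) :
    |∫ ω, ξ s ω * ξ t ω ∂μ| ≤ 8 * C₁ ^ 2 * C₂ ^ (1 - 2 / δ) *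
      (((t.1 - s.1 - 1 : ℕ) : ℝ) + 1) ^ (-(φ * (1 - 2 / δ))) := by
  obtain ⟨hsi, hsC⟩ := mom19 μ (ξ s) hC₁ (hmeas s) (hmom s)
  obtain ⟨hti, htC⟩ := mom19 μ (ξ t) hC₁ (hmeas t) (hmom t)
  have hst' : s.1 < t.1 := hst
  set q := t.1 - s.1 with hq
  have hq0 : 0 < q := by omega
  have key := dav19 μ
    (m1 := ⨆ r : {r : Fin T // (r : ℕ) ≤ s.1}, MeasurableSpace.comap (ξ r.1) inferInstance)
    (m2 := ⨆ r : {r : Fin T // s.1 + q ≤ (r : ℕ)}, MeasurableSpace.comap (ξ r.1) inferInstance)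
    (iSup_le fun r => (hmeas r.1).comap_le) (iSup_le fun r => (hmeas r.1).comap_le)
    (ξ s) (ξ t) (C₂ * (q : ℝ) ^ (-φ)) C₁ δ hC₁ (by positivity) hδ
    (measurable_iff_comap_le.mpr (le_iSup
      (fun r : {r : Fin T // (r : ℕ) ≤ s.1} => MeasurableSpace.comap (ξ r.1) inferInstance)
      ⟨s, le_rfl⟩))
    (measurable_iff_comap_le.mpr (le_iSup
      (fun r : {r : Fin T // s.1 + q ≤ (r : ℕ)} => MeasurableSpace.comap (ξ r.1) inferInstance)
      ⟨t, by omega⟩))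
    (hmean s) hsi hsC hti htC
    (fun A B hA hB => (alpha19 μ ξ q s.1 A B hA hB).trans (hmix q hq0))
  refine key.trans (le_of_eq ?_)
  have e : (((q - 1 : ℕ) : ℝ) + 1) = q := by
    have : q - 1 + 1 = q := by omega
    exact_mod_cast this
  rw [e, Real.mul_rpow hC₂ (by positivity), ← Real.rpow_mul (by positivity)]
  ring_nf

/-- Spectral-norm bound for the averaged second-moment matrix
`Σ = N⁻¹ Σᵢ E[aᵢ aᵢᵀ]` of mean-zero weakly dependent rows:
`‖Σ‖₂ ≤ C₁² (1 + 16 C₂^{1−2/δ} Σ_{q=1}^∞ q^{−φ(1−2/δ)})`. -/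
theorem stmt_19 (δ φ C₁ C₂ : ℝ) (hδ : 2 < δ) (hφ : φ * (1 - 2 / δ) > 1)
    (hC₁ : 0 ≤ C₁) (hC₂ : 0 ≤ C₂)
    {Ω : Type} [MeasurableSpace Ω] (μ : Measure Ω) [IsProbabilityMeasure μ]
    (N T : ℕ) (hN : 0 < N) (hT : 0 < T)
    (a : Fin N → Ω → Fin T → ℝ)
    (hmeas : ∀ i t, Measurable fun ω => a i ω t)
    (hmean : ∀ i t, ∫ ω, a i ω t ∂μ = 0)
    (hmom : ∀ i t, ∫⁻ ω, ENNReal.ofReal (|a i ω t| ^ δ) ∂μ ≤ ENNReal.ofReal (C₁ ^ δ))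
    (hmix : ∀ i, ∀ q : ℕ, 0 < q →
      alphaMixFin μ (fun t ω => a i ω t) q ≤ C₂ * (q : ℝ) ^ (-φ)) :
    matSpecNorm (Matrix.of fun s t : Fin T =>
        (N : ℝ)⁻¹ * ∑ i : Fin N, ∫ ω, a i ω s * a i ω t ∂μ) ≤
      C₁ ^ 2 * (1 + 16 * C₂ ^ (1 - 2 / δ) *
        ∑' q : ℕ, ((q : ℝ) + 1) ^ (-(φ * (1 - 2 / δ)))) := by
  have hsumm : Summable fun q : ℕ => ((q : ℝ) + 1) ^ (-(φ * (1 - 2 / δ))) := by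
    have h := (Real.summable_nat_rpow (p := -(φ * (1 - 2 / δ)))).mpr (by linarith)
    have := (summable_nat_add_iff 1).mpr h
    simpa using this
  set f : ℕ → ℝ := fun q => ((q : ℝ) + 1) ^ (-(φ * (1 - 2 / δ))) with hf
  have hf0 : ∀ q, 0 ≤ f q := fun q => by simp only [hf]; positivity
  have hN' : (0 : ℝ) < N := by exact_mod_cast hN
  have hTs : 0 ≤ ∑' q, f q := tsum_nonneg hf0
  have hK : 0 ≤ 8 * C₁ ^ 2 * C₂ ^ (1 - 2 / δ) := by positivity
  have havg : ∀ (c : Fin N → ℝ) (b : ℝ), (∀ i, |c i| ≤ b) → |(N : ℝ)⁻¹ * ∑ i, c i| ≤ b := by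
    intro c b h
    rw [abs_mul, abs_of_pos (inv_pos.mpr hN'), inv_mul_le_iff₀ hN']
    refine (Finset.abs_sum_le_sum_abs _ _).trans ?_
    refine (Finset.sum_le_sum fun i _ => h i).trans ?_
    simp
  have hoff : ∀ i, ∀ s t : Fin T, s < t → |∫ ω, a i ω s * a i ω t ∂μ| ≤
      8 * C₁ ^ 2 * C₂ ^ (1 - 2 / δ) * f (t.1 - s.1 - 1) := fun i s t hst =>
    entry19 δ φ C₁ C₂ hδ hC₁ hC₂ μ T (fun t ω => a i ω t) (hmeas i) (hmean i) (hmom i) (hmix i)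
      s t hst
  refine schur19 _ _ (by positivity) (fun s t => ?_) (fun s => ?_)
  · simp only [Matrix.of_apply]
    simp_rw [mul_comm (a _ _ s)]
  · have key := rowsum19 f hf0 hsumm s (fun t => |(Matrix.of fun s t : Fin T =>
        (N : ℝ)⁻¹ * ∑ i : Fin N, ∫ ω, a i ω s * a i ω t ∂μ) s t|) (C₁ ^ 2) _ hK ?_ ?_ ?_
    · refine key.trans (le_of_eq ?_)
      ring
    · simp only [Matrix.of_apply]
      refine havg _ _ fun i => ?_
      obtain ⟨h1, h2⟩ := mom19 μ _ hC₁ (hmeas i s) (hmom i s)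
      rw [abs_of_nonneg (integral_nonneg fun ω => mul_self_nonneg _)]
      exact second19' μ _ hC₁ hδ h1 h2
    · intro t hst
      simp only [Matrix.of_apply]
      exact havg _ _ fun i => hoff i s t hst
    · intro t hts
      simp only [Matrix.of_apply]
      refine havg _ _ fun i => ?_
      simp_rw [mul_comm (a _ _ s)]
      exact hoff i t s hts
end
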